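/- arXiv:1709.09869 — 3 statements merged into one kernel-verified Lean document; each statement's English description precedes it below -/
import Mathlib

section
/- The Mandelbrot set is compact, connected, and full (its complement in the plane is connected). -/
/-- The quadratic map `z ↦ z² + c`. -/
noncomputable def quadMap (c z : ℂ) : ℂ := z ^ 2 + c

/-- The Mandelbrot set: parameters `c` for which the orbit of `0` under `z ↦ z² + c`
is bounded. -/
def mandelbrot : Set ℂ :=
  {c : ℂ | ∃ B : ℝ, ∀ n : ℕ, ‖(quadMap c)^[n] 0‖ ≤ B}

open Set Filter Topology

lemma sqrt_lift (D : Set (ℂ × ℂ)) (hD : ∀ c u, (c, u) ∈ D → ∀ t : ℝ, 0 ≤ t → t ≤ 1 → (c, (t : ℂ) * u) ∈ D)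
    (h : ℂ × ℂ → ℂ) (hc : ContinuousOn h D) (h0 : ∀ p ∈ D, h p ≠ 0)
    (h1 : ∀ p ∈ D, h (p.1, 0) = 1) :
    ∃ k : ℂ × ℂ → ℂ, ContinuousOn k D ∧ (∀ p ∈ D, k p ^ 2 = h p) ∧ ∀ p ∈ D, k (p.1, 0) = 1 := by
  have hmem : ∀ q : unitInterval × D, ((q.2 : ℂ × ℂ).1, ((q.1 : ℝ) : ℂ) * (q.2 : ℂ × ℂ).2) ∈ D :=
    fun q => hD _ _ q.2.2 _ q.1.2.1 q.1.2.2
  have hz : ∀ p ∈ D, (p.1, (0:ℂ)) ∈ D := fun p hp => by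
    simpa using hD p.1 p.2 hp 0 le_rfl zero_le_one
  let H : C(unitInterval × D, {z : ℂ // z ≠ 0}) :=
    ⟨fun q => ⟨h ((q.2 : ℂ × ℂ).1, ((q.1 : ℝ) : ℂ) * (q.2 : ℂ × ℂ).2), h0 _ (hmem q)⟩, by
      refine Continuous.subtype_mk ?_ _
      exact hc.comp_continuous (by fun_prop) hmem⟩
  let f : C(D, ℂ) := ⟨fun _ => 0, continuous_const⟩
  have H0 : ∀ a, H (0, a) = (⟨_, Complex.exp_ne_zero (f a)⟩ : {z : ℂ // z ≠ 0}) := by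
    intro a
    apply Subtype.ext
    simp [H, f, h1 _ a.2]
  let G := Complex.isCoveringMap_exp.liftHomotopy H f H0
  have hG : ∀ a : D, Complex.exp (G (1, a)) = h a := by
    intro a
    have := congrFun (Complex.isCoveringMap_exp.liftHomotopy_lifts H f H0) (1, a)
    have e : Complex.exp (G (1, a)) = (H (1, a)).1 := congrArg Subtype.val this
    rw [e]; simp [H]
  classical
  let k0 : D → ℂ := fun a => Complex.exp (G (1, a) / 2)
  have hk0c : Continuous k0 := by
    have : Continuous G := G.continuous
    fun_prop
  have hk0 : ∀ a : D, k0 a ^ 2 = h a := by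
    intro a
    simp only [k0]
    rw [← Complex.exp_nat_mul, ← hG a]; congr 1; push_cast; ring
  let k1 : D → ℂ := fun a => k0 a / k0 ⟨(a.1.1, 0), hz _ a.2⟩
  have hk1c : Continuous k1 := by
    refine hk0c.div (hk0c.comp (by fun_prop)) (fun a => Complex.exp_ne_zero _)
  refine ⟨fun p => if hp : p ∈ D then k1 ⟨p, hp⟩ else 0, ?_, ?_, ?_⟩
  · rw [continuousOn_iff_continuous_domRestrict]
    convert hk1c using 1
    ext a
    simp
  · intro p hp
    simp only [hp, dif_pos, k1, div_pow, hk0]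
    rw [h1 p hp]; simp
  · intro p hp
    simp only [hz p hp, dif_pos, k1]
    exact div_self (Complex.exp_ne_zero _)

def Dset (X : Set ℂ) (R : ℂ → ℝ) (j : ℕ) : Set (ℂ × ℂ) :=
  {p | p.1 ∈ X ∧ ‖p.2‖ ^ (2 ^ j) * R p.1 < 1}

lemma psi_exists (X : Set ℂ) (R : ℂ → ℝ) (N : ℕ) (hR0 : ∀ c ∈ X, 0 < R c)
    (hR : ∀ c ∈ X, ∀ j, j < N → ‖(quadMap c)^[j] c‖ ≤ R c) (j : ℕ) (hj : j ≤ N) :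
    ∃ g : ℂ × ℂ → ℂ, ContinuousOn g (Dset X R j) ∧ (∀ c ∈ X, g (c, 0) = 1) ∧
      (∀ c u, (c, u) ∈ Dset X R j → u ≠ 0 →
        (quadMap c)^[j] (g (c, u) / u) = (1 / u) ^ (2 ^ j)) ∧
      (∀ c ∈ X, ∀ z, R c < ‖(quadMap c)^[j] z‖ →
        ∃ u, u ≠ 0 ∧ (c, u) ∈ Dset X R j ∧ g (c, u) / u = z) ∧
      (∀ c u u', (c, u) ∈ Dset X R j → (c, u') ∈ Dset X R j → u ≠ 0 → u' ≠ 0 →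
        g (c, u) / u = g (c, u') / u' → u = u') := by
  induction j with
  | zero =>
    refine ⟨fun _ => 1, continuousOn_const, fun _ _ => rfl, fun c u _ hu => by simp, ?_, ?_⟩
    · intro c hc z hz
      simp only [Function.iterate_zero, id] at hz
      have hz0 : 0 < ‖z‖ := (hR0 c hc).trans hz
      refine ⟨z⁻¹, inv_ne_zero (norm_pos_iff.1 hz0), ⟨hc, ?_⟩, by simp⟩
      simp only [pow_zero, pow_one, norm_inv]
      rw [inv_mul_lt_iff₀ hz0]; simpa using hz
    · intro c u u' _ _ hu hu' h
      simpa using h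
  | succ j ih =>
    obtain ⟨g, gc, g0, ga, gb, gu⟩ := ih (by omega)
    have hz : ∀ c u, (c, u) ∈ Dset X R j → g (c, u) - c * u ≠ 0 := by
      intro c u hu h
      by_cases hu0 : u = 0
      · subst hu0
        rw [g0 c hu.1] at h; simp at h
      · have h1 : g (c, u) / u = c := by
          rw [div_eq_iff hu0]; linear_combination h
        have h2 := ga c u hu hu0
        rw [h1] at h2
        have h3 := hR c hu.1 j (by omega)
        rw [h2] at h3
        have h4 := hu.2
        simp only at h4
        rw [norm_pow, norm_div, norm_one, one_div, inv_pow] at h3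
        have hp : 0 < ‖u‖ ^ 2 ^ j := by positivity
        have : 1 ≤ ‖u‖ ^ 2 ^ j * R c := by
          rw [inv_le_iff_one_le_mul₀ hp] at h3; linarith
        linarith
    obtain ⟨k, kc, k2, k1⟩ := sqrt_lift (Dset X R j) (by
        rintro c u ⟨hc, hu⟩ t ht0 ht1
        refine ⟨hc, lt_of_le_of_lt ?_ hu⟩
        simp only
        have := (hR0 c hc).le
        gcongr
        rw [norm_mul, Complex.norm_real, Real.norm_of_nonneg ht0]
        exact mul_le_of_le_one_left (norm_nonneg _) ht1)
      (fun p => g p - p.1 * p.2) (gc.sub (by fun_prop)) (fun p hp => hz p.1 p.2 hp)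
      (fun p hp => by simp [g0 p.1 hp.1])
    have hsq : ∀ c u, (c, u) ∈ Dset X R (j+1) ↔ (c, u ^ 2) ∈ Dset X R j := by
      intro c u
      have e : ‖u‖ ^ (2 ^ (j+1)) = ‖u ^ 2‖ ^ (2 ^ j) := by
        rw [norm_pow, ← pow_mul, pow_succ, mul_comm]
      simp only [Dset, mem_ofPred_eq, e]
    have hkey : ∀ c u, (c, u) ∈ Dset X R (j+1) → u ≠ 0 →
        quadMap c (k (c, u^2) / u) = g (c, u^2) / u ^ 2 := by
      intro c u hu hu0
      rw [hsq] at hu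
      have := k2 _ hu
      simp only at this
      rw [quadMap, div_pow, this]; field_simp; ring
    refine ⟨fun p => k (p.1, p.2 ^ 2), ?_, ?_, ?_, ?_, ?_⟩
    · exact kc.comp (by fun_prop) (fun p hp => (hsq p.1 p.2).1 hp)
    · intro c hc
      have : (c, (0:ℂ)) ∈ Dset X R j := ⟨hc, by simp⟩
      simpa using k1 _ this
    · intro c u hu hu0
      rw [Function.iterate_succ_apply, hkey c u hu hu0, ga c _ ((hsq _ _).1 hu) (pow_ne_zero _ hu0)]
      simp only [one_div, inv_pow, pow_succ]; ring
    · intro c hc z hz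
      rw [Function.iterate_succ_apply] at hz
      obtain ⟨v, hv0, hvD, hv⟩ := gb c hc _ hz
      obtain ⟨u, rfl⟩ : ∃ u : ℂ, u ^ 2 = v := IsAlgClosed.exists_pow_nat_eq v (by norm_num)
      have hu0 : u ≠ 0 := fun h => hv0 (by simp [h])
      have hD' := (hsq c u).2 hvD
      have h1 := hkey c u hD' hu0
      rw [hv] at h1
      simp only [quadMap, add_left_inj] at h1
      rcases sq_eq_sq_iff_eq_or_eq_neg.1 h1 with h | h
      · exact ⟨u, hu0, hD', h⟩
      · refine ⟨-u, neg_ne_zero.2 hu0, (hsq _ _).2 (by simpa using hvD), ?_⟩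
        simp only [neg_sq, div_neg, h, neg_neg]
    · intro c u u' hu hu' hu0 hu0' h
      simp only at h
      have h1 := hkey c u hu hu0
      rw [h, hkey c u' hu' hu0'] at h1
      have h2 := gu c _ _ ((hsq _ _).1 hu) ((hsq _ _).1 hu') (pow_ne_zero _ hu0)
        (pow_ne_zero _ hu0') h1.symm
      rcases sq_eq_sq_iff_eq_or_eq_neg.1 h2 with h3 | h3
      · exact h3
      · exfalso
        have hk : k (c, u' ^ 2) ≠ 0 := by
          intro h4
          have := k2 _ ((hsq _ _).1 hu')
          rw [h4] at this
          exact hz _ _ ((hsq _ _).1 hu') (by rw [← this]; simp)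
        rw [h3] at h
        simp only [neg_sq, div_neg] at h
        have : k (c, u' ^ 2) / u' = 0 := by
          linear_combination (-1/2) * h
        exact (div_ne_zero hk hu0') this

lemma norm_mem_preconn (J : Set ℝ) (hJ : IsPreconnected J) (h0 : ∀ r ∈ J, 0 ≤ r) :
    IsPreconnected {z : ℂ | ‖z‖ ∈ J} := by
  have h1 : IsPreconnected (J ×ˢ (univ : Set ℝ)) := hJ.prod isPreconnected_univ
  have h2 := h1.image (fun p : ℝ × ℝ => (p.1 : ℂ) * Complex.exp (p.2 * Complex.I))
    (by fun_prop)
  convert h2 using 1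
  ext z
  constructor
  · intro hz
    exact ⟨(‖z‖, z.arg), ⟨hz, mem_univ _⟩, Complex.norm_mul_exp_arg_mul_I z⟩
  · rintro ⟨⟨r, t⟩, ⟨hr, -⟩, rfl⟩
    have : ‖(r : ℂ) * Complex.exp (t * Complex.I)‖ = r := by
      rw [norm_mul, Complex.norm_exp_ofReal_mul_I, mul_one, Complex.norm_real,
        Real.norm_of_nonneg (h0 r hr)]
    show ‖_‖ ∈ J
    rw [this]; exact hr

noncomputable def MP (n : ℕ) (c : ℂ) : ℂ := (quadMap c)^[n] 0

lemma MP_zero (c : ℂ) : MP 0 c = 0 := rfl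
lemma MP_succ (n : ℕ) (c : ℂ) : MP (n+1) c = MP n c ^ 2 + c := by
  simp only [MP, Function.iterate_succ_apply', quadMap]
lemma MP_one (c : ℂ) : MP 1 c = c := by simp [MP_succ, MP_zero]
lemma iter_c (n : ℕ) (c : ℂ) : (quadMap c)^[n] c = MP (n+1) c := by
  simp [MP, Function.iterate_succ_apply, quadMap]
lemma MP_cont (n : ℕ) : Continuous (MP n) := by
  induction n with
  | zero => exact continuous_const
  | succ n ih =>
    have : MP (n+1) = fun c => MP n c ^ 2 + c := funext (MP_succ n)
    rw [this]; fun_prop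

lemma MP_succ_ge (n : ℕ) (c : ℂ) : ‖MP n c‖ ^ 2 - ‖c‖ ≤ ‖MP (n+1) c‖ := by
  rw [MP_succ]
  have := norm_sub_le (MP n c ^ 2 + c) c
  simp only [add_sub_cancel_right, norm_pow] at this
  linarith

lemma MP_ge (c : ℂ) (hc : 2 < ‖c‖) (n : ℕ) : ‖c‖ ≤ ‖MP (n+1) c‖ := by
  induction n with
  | zero => rw [MP_one]
  | succ n ih =>
    have := MP_succ_ge (n+1) c
    nlinarith

lemma MP_ge' {c : ℂ} {n : ℕ} (h : 2 < ‖MP n c‖) : ‖c‖ ≤ ‖MP n c‖ := by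
  by_cases hc : 2 < ‖c‖
  · cases n with
    | zero => simp [MP_zero] at h; linarith
    | succ n => exact MP_ge c hc n
  · linarith

lemma MP_grow {c : ℂ} {n : ℕ} (h : 2 < ‖MP n c‖) : 3 * (‖MP n c‖ - 2) ≤ ‖MP (n+1) c‖ - 2 := by
  have := MP_succ_ge n c
  have := MP_ge' h
  nlinarith

lemma MP_lt {c : ℂ} {n : ℕ} (h : 2 < ‖MP n c‖) : ‖MP n c‖ < ‖MP (n+1) c‖ := by
  have := MP_grow h
  linarith

lemma MP_mono {c : ℂ} {n m : ℕ} (h : 2 < ‖MP n c‖) (hm : n ≤ m) : ‖MP n c‖ ≤ ‖MP m c‖ := by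
  induction m, hm using Nat.le_induction with
  | base => exact le_rfl
  | succ m hm ih => exact ih.trans (MP_lt (h.trans_le ih)).le

lemma MP_max {c : ℂ} {n m : ℕ} (h : 2 < ‖MP n c‖) (hm : m ≤ n) : ‖MP m c‖ ≤ ‖MP n c‖ := by
  by_cases h2 : 2 < ‖MP m c‖
  · exact MP_mono h2 hm
  · linarith

lemma MP_grow' {c : ℂ} {n : ℕ} (h : 2 < ‖MP n c‖) (k : ℕ) :
    3 ^ k * (‖MP n c‖ - 2) ≤ ‖MP (n+k) c‖ - 2 := by
  induction k with
  | zero => simp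
  | succ k ih =>
    have h1 : 2 < ‖MP (n+k) c‖ := h.trans_le (MP_mono h (by omega))
    have := MP_grow h1
    rw [pow_succ]
    rw [← add_assoc]; linarith

lemma mem_mandelbrot_iff (c : ℂ) : c ∈ mandelbrot ↔ ∀ n, ‖MP n c‖ ≤ 2 := by
  constructor
  · rintro ⟨B, hB⟩ n
    by_contra! h
    obtain ⟨k, hk⟩ := pow_unbounded_of_one_lt (B / (‖MP n c‖ - 2)) (by norm_num : (1:ℝ) < 3)
    have h1 := MP_grow' h k
    rw [div_lt_iff₀ (by linarith)] at hk
    have := hB (n + k)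
    change ‖MP (n+k) c‖ ≤ B at this
    linarith
  · intro h; exact ⟨2, h⟩

lemma mandelbrot_norm_le {c : ℂ} (h : c ∈ mandelbrot) : ‖c‖ ≤ 2 := by
  have := (mem_mandelbrot_iff c).1 h 1
  rwa [MP_one] at this

lemma mandelbrot_isCompact : IsCompact mandelbrot := by
  have hcl : IsClosed mandelbrot := by
    have : mandelbrot = ⋂ n, {c | ‖MP n c‖ ≤ 2} := by
      ext c; simp [mem_mandelbrot_iff]
    rw [this]
    exact isClosed_iInter fun n => isClosed_le (MP_cont n).norm continuous_const
  refine (isCompact_closedBall (0:ℂ) 2).of_isClosed_subset hcl fun c hc => ?_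
  simpa using mandelbrot_norm_le hc

lemma zero_mem_mandelbrot : (0:ℂ) ∈ mandelbrot := by
  rw [mem_mandelbrot_iff]
  intro n
  have : MP n 0 = 0 := by
    induction n with
    | zero => rfl
    | succ n ih => rw [MP_succ, ih]; simp
  simp [this]

lemma MP_diff (n : ℕ) : Differentiable ℂ (MP n) := by
  induction n with
  | zero => exact differentiable_const _
  | succ n ih =>
    have : MP (n+1) = fun c => MP n c ^ 2 + c := funext (MP_succ n)
    rw [this]; fun_prop

lemma mandelbrot_compl_isConnected : IsConnected mandelbrotᶜ := by
  have hopen : IsOpen mandelbrotᶜ := mandelbrot_isCompact.isClosed.isOpen_compl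
  have hE : IsConnected (Metric.closedBall (0:ℂ) 2)ᶜ := by
    have := norm_mem_preconn (Ioi 2) isPreconnected_Ioi (fun r hr => le_trans (by norm_num) (le_of_lt hr))
    have e : (Metric.closedBall (0:ℂ) 2)ᶜ = {z : ℂ | ‖z‖ ∈ Ioi (2:ℝ)} := by
      ext z; simp
    rw [e]
    exact ⟨⟨3, by simp; norm_num⟩, this⟩
  have hEs : (Metric.closedBall (0:ℂ) 2)ᶜ ⊆ mandelbrotᶜ := by
    apply compl_subset_compl.2
    intro c hc
    simpa using mandelbrot_norm_le hc
  have key : ∀ c ∈ mandelbrotᶜ, ∃ y ∈ connectedComponentIn mandelbrotᶜ c, y ∈ (Metric.closedBall (0:ℂ) 2)ᶜ := by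
    intro c hc
    by_contra! hcon
    set U := connectedComponentIn mandelbrotᶜ c with hU
    have hUo : IsOpen U := hopen.connectedComponentIn
    have hUb : Bornology.IsBounded U := Metric.isBounded_closedBall.subset
      (fun y hy => not_not.1 (hcon y hy))
    have hcU : c ∈ U := mem_connectedComponentIn hc
    have hfr : ∀ y ∈ frontier U, y ∈ mandelbrot := by
      intro y hy
      by_contra hyM
      have hVo : IsOpen (connectedComponentIn mandelbrotᶜ y) := hopen.connectedComponentIn
      have hyV : y ∈ connectedComponentIn mandelbrotᶜ y := mem_connectedComponentIn hyM
      obtain ⟨z, hzV, hzU⟩ := mem_closure_iff.1 hy.1 _ hVo hyV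
      have e1 := connectedComponentIn_eq hzV
      have e2 := connectedComponentIn_eq hzU
      rw [hUo.frontier_eq] at hy
      apply hy.2
      rw [hU, e2, ← e1]; exact hyV
    apply hc
    rw [mem_mandelbrot_iff]
    intro n
    exact Complex.norm_le_of_forall_mem_frontier_norm_le hUb (MP_diff n).diffContOnCl
      (fun z hz => (mem_mandelbrot_iff z).1 (hfr z hz) n) (subset_closure hcU)
  obtain ⟨e, he⟩ := hE.nonempty
  refine ⟨⟨e, hEs he⟩, isPreconnected_of_forall e fun c hc => ?_⟩
  obtain ⟨y, hy, hyE⟩ := key c hc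
  refine ⟨connectedComponentIn mandelbrotᶜ c ∪ (Metric.closedBall (0:ℂ) 2)ᶜ, ?_, Or.inr he,
    Or.inl (mem_connectedComponentIn hc), ?_⟩
  · exact union_subset (connectedComponentIn_subset _ _) hEs
  · exact IsPreconnected.union y hy hyE isPreconnected_connectedComponentIn hE.isPreconnected

lemma Phi_exists (N : ℕ) : ∃ Φ : ℂ → ℂ, ContinuousOn Φ {c | 2 < ‖MP N c‖} ∧
    ∀ c, 2 < ‖MP N c‖ → Φ c ^ (2 ^ N) = MP (N+1) c := by
  set X : Set ℂ := {c | 2 < ‖MP N c‖} with hX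
  have hXo : IsOpen X := isOpen_lt continuous_const (MP_cont N).norm
  obtain ⟨g, gc, -, ga, gb, gu⟩ := psi_exists X (fun c => ‖MP N c‖) N
    (fun c hc => lt_trans (by norm_num) hc)
    (fun c hc j hj => by rw [iter_c]; exact MP_max hc (by omega)) N le_rfl
  have hDo : IsOpen (Dset X (fun c => ‖MP N c‖) N) := by
    refine (hXo.preimage continuous_fst).inter (isOpen_lt (f := fun p : ℂ × ℂ => ‖p.2‖ ^ 2 ^ N * ‖MP N p.1‖) (g := fun _ => (1:ℝ)) ?_ continuous_const)
    have := MP_cont N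
    fun_prop
  have hex : ∀ c, ∃ u, c ∈ X → u ≠ 0 ∧ (c, u) ∈ Dset X (fun c => ‖MP N c‖) N ∧ g (c, u) / u = c := by
    intro c
    by_cases hc : c ∈ X
    · obtain ⟨u, hu⟩ := gb c hc c (by rw [iter_c]; exact MP_lt hc)
      exact ⟨u, fun _ => hu⟩
    · exact ⟨0, fun h => absurd h hc⟩
  choose u hu using hex
  have hpow : ∀ c ∈ X, (u c) ^ (2 ^ N) * MP (N+1) c = 1 := by
    intro c hc
    obtain ⟨h0, hD, he⟩ := hu c hc
    have := ga c (u c) hD h0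
    rw [he, iter_c] at this
    rw [this, ← mul_pow, mul_one_div_cancel h0, one_pow]
  have hcont : ContinuousOn u X := by
    intro c0 hc0
    refine ContinuousAt.continuousWithinAt ?_
    have hXn : ∀ᶠ c in 𝓝 c0, c ∈ X := hXo.mem_nhds hc0
    refine (isCompact_closedBall (0:ℂ) 1).tendsto_nhds_of_unique_mapClusterPt (y := u c0) ?_ ?_
    · filter_upwards [hXn] with c hc
      have h := congrArg norm (hpow c hc)
      rw [norm_mul, norm_pow, norm_one] at h
      have h2 : 2 < ‖MP (N+1) c‖ := lt_trans hc (MP_lt hc)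
      simp only [Metric.mem_closedBall, dist_zero_right]
      by_contra! hgt
      have := one_le_pow₀ (n := 2 ^ N) hgt.le
      nlinarith
    · intro y _ hy
      rw [mapClusterPt_iff_ultrafilter] at hy
      obtain ⟨F, hF, hFy⟩ := hy
      have hFid : Tendsto (fun c : ℂ => c) F (𝓝 c0) := hF
      have h1 : y ^ (2 ^ N) * MP (N+1) c0 = 1 := by
        have t1 : Tendsto (fun c => (u c) ^ (2 ^ N) * MP (N+1) c) F (𝓝 (y ^ (2 ^ N) * MP (N+1) c0)) :=
          (hFy.pow _).mul (((MP_cont (N+1)).tendsto c0).comp hFid)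
        have t2 : Tendsto (fun c => (u c) ^ (2 ^ N) * MP (N+1) c) F (𝓝 1) := by
          refine tendsto_const_nhds.congr' ?_
          filter_upwards [hF hXn] with c hc using (hpow c hc).symm
        exact tendsto_nhds_unique t1 t2
      have hy0 : y ≠ 0 := by
        rintro rfl
        simp at h1
      have hyD : (c0, y) ∈ Dset X (fun c => ‖MP N c‖) N := by
        refine ⟨hc0, ?_⟩
        have h := congrArg norm h1
        rw [norm_mul, norm_pow, norm_one] at h
        rw [← h]
        have : 0 < ‖y‖ := norm_pos_iff.2 hy0
        have := MP_lt hc0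
        simp only
        gcongr
      have h2 : g (c0, y) = c0 * y := by
        have t0 : Tendsto (fun c => (c, u c)) F (𝓝 (c0, y)) := hFid.prodMk_nhds hFy
        have t1 := ((gc.continuousAt (hDo.mem_nhds hyD)).tendsto).comp t0
        have t2 : Tendsto (g ∘ fun c => (c, u c)) F (𝓝 (c0 * y)) := by
          refine (hFid.mul hFy).congr' ?_
          filter_upwards [hF hXn] with c hc
          obtain ⟨h0, hD, he⟩ := hu c hc
          rw [div_eq_iff h0] at he
          exact he.symm
        exact tendsto_nhds_unique t1 t2
      obtain ⟨h0, hD, he⟩ := hu c0 hc0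
      refine gu c0 y (u c0) hyD hD hy0 h0 ?_
      rw [he, h2, mul_div_cancel_right₀ _ hy0]
  refine ⟨fun c => (u c)⁻¹, hcont.inv₀ fun c hc => (hu c hc).1, fun c hc => ?_⟩
  rw [inv_pow, inv_eq_iff_eq_inv]
  exact eq_inv_of_mul_eq_one_left (hpow c hc)

lemma strict_inj {f : ℂ → ℂ} {f' a : ℂ} (hf : HasStrictDerivAt f f' a) (hf' : f' ≠ 0) :
    ∃ V ∈ 𝓝 a, InjOn f V := by
  refine ⟨_, hf.eventually_left_inverse hf', fun x hx y hy h => ?_⟩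
  simp only [mem_ofPred_eq] at hx hy
  rw [← hx, ← hy, h]

lemma fold_lemma {Φ : ℂ → ℂ} {c₁ : ℂ} (hΦ : AnalyticAt ℂ Φ c₁)
    (hnc : ¬ ∀ᶠ z in 𝓝 c₁, Φ z = Φ c₁) (h0 : Φ c₁ ≠ 0)
    (hni : ∀ V ∈ 𝓝 c₁, ¬ InjOn Φ V) (V : Set ℂ) (hV : V ∈ 𝓝 c₁) :
    ∃ c ∈ V, ∃ c' ∈ V, c ≠ c' ∧ Φ c = Φ c' ∧ ‖Φ c₁‖ < ‖Φ c‖ := by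
  have hA : AnalyticAt ℂ (fun z => Φ z - Φ c₁) c₁ := hΦ.sub analyticAt_const
  obtain ⟨n, g, hg, hg0, hgeq⟩ := hA.exists_eventuallyEq_pow_smul_nonzero_iff.2 (by
    simpa only [sub_eq_zero] using hnc)
  have hn0 : n ≠ 0 := by
    rintro rfl
    have := hgeq.self_of_nhds
    simp at this
    exact hg0 this.symm
  obtain ⟨α, hα⟩ : ∃ α : ℂ, α ^ n = g c₁ := IsAlgClosed.exists_pow_nat_eq _ (Nat.pos_of_ne_zero hn0)
  have hα0 : α ≠ 0 := by
    rintro rfl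
    rw [zero_pow hn0] at hα
    exact hg0 hα.symm
  let r : ℂ → ℂ := fun c => α * Complex.exp (Complex.log (g c / g c₁) / n)
  have hr : AnalyticAt ℂ r c₁ := by
    have h1 : AnalyticAt ℂ (fun c => g c / g c₁) c₁ := hg.div analyticAt_const hg0
    have h2 : AnalyticAt ℂ (fun c => Complex.log (g c / g c₁)) c₁ :=
      h1.clog (by rw [div_self hg0]; exact Complex.one_mem_slitPlane)
    exact analyticAt_const.mul (h2.div analyticAt_const (by exact_mod_cast hn0)).cexp
  have hr1 : r c₁ = α := by simp [r, div_self hg0]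
  let h : ℂ → ℂ := fun c => (c - c₁) * r c
  have hh : AnalyticAt ℂ h c₁ := (analyticAt_id.sub analyticAt_const).mul hr
  have hder : HasDerivAt h α c₁ := by
    have : HasDerivAt h _ c₁ :=
      ((hasDerivAt_id c₁).sub_const c₁).mul hr.differentiableAt.hasDerivAt
    convert this using 1
    simp [hr1]
  have hst : HasStrictDerivAt h α c₁ := by
    have := hh.hasStrictDerivAt
    rwa [hder.deriv] at this
  have hh1 : h c₁ = 0 := by simp [h]
  have hpow : ∀ᶠ c in 𝓝 c₁, Φ c = Φ c₁ + h c ^ n := by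
    have : ∀ᶠ c in 𝓝 c₁, g c ≠ 0 := hg.continuousAt.eventually_ne hg0
    filter_upwards [hgeq, this] with c hc hgc
    have e : Φ c = Φ c₁ + (c - c₁) ^ n * g c := by
      rw [smul_eq_mul] at hc; linear_combination hc
    rw [e]
    simp only [h, r, mul_pow, ← Complex.exp_nat_mul, hα]
    rw [mul_div_cancel₀ _ (by exact_mod_cast hn0), Complex.exp_log (div_ne_zero hgc hg0),
      mul_div_cancel₀ _ hg0]
  have hn2 : 2 ≤ n := by
    by_contra! hlt
    obtain rfl : n = 1 := by omega
    obtain ⟨W, hW, hWi⟩ := strict_inj hst hα0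
    refine hni _ (inter_mem hW hpow) fun x hx y hy hxy => hWi hx.1 hy.1 ?_
    have h1 := hx.2
    have h2 := hy.2
    simp only [mem_ofPred_eq, pow_one] at h1 h2
    rw [h1, h2] at hxy
    exact add_left_cancel hxy
  have hopen : h '' (V ∩ {c | Φ c = Φ c₁ + h c ^ n}) ∈ 𝓝 (0:ℂ) := by
    rw [← hh1, ← hst.map_nhds_eq hα0]
    exact image_mem_map (inter_mem hV hpow)
  obtain ⟨ε, hε, hball⟩ := Metric.mem_nhds_iff.1 hopen
  obtain ⟨v₀, hv₀⟩ : ∃ v₀ : ℂ, v₀ ^ n = Φ c₁ := IsAlgClosed.exists_pow_nat_eq _ (Nat.pos_of_ne_zero hn0)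
  have hv00 : v₀ ≠ 0 := by
    rintro rfl
    rw [zero_pow hn0] at hv₀
    exact h0 hv₀.symm
  have hvp : 0 < ‖v₀‖ := norm_pos_iff.2 hv00
  obtain ⟨t, ht0, ht⟩ : ∃ t : ℝ, 0 < t ∧ t * ‖v₀‖ < ε :=
    ⟨ε / (2 * ‖v₀‖), by positivity, by field_simp; norm_num⟩
  have hζ := Complex.isPrimitiveRoot_exp n hn0
  set ζ := Complex.exp (2 * Real.pi * Complex.I / n)
  have hζ1 : ζ ≠ 1 := hζ.ne_one hn2
  have hζn : ‖ζ‖ = 1 := hζ.norm'_eq_one hn0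
  have m1 : (t : ℂ) * v₀ ∈ Metric.ball (0:ℂ) ε := by
    simp [abs_of_pos ht0, ht]
  have m2 : (t : ℂ) * v₀ * ζ ∈ Metric.ball (0:ℂ) ε := by
    simp [abs_of_pos ht0, ht, hζn]
  obtain ⟨c, ⟨hcV, hc⟩, hhc⟩ := hball m1
  obtain ⟨c', ⟨hcV', hc'⟩, hhc'⟩ := hball m2
  simp only [mem_ofPred_eq] at hc hc'
  refine ⟨c, hcV, c', hcV', ?_, ?_, ?_⟩
  · rintro rfl
    rw [hhc] at hhc'
    have hne : (t : ℂ) * v₀ ≠ 0 := mul_ne_zero (by exact_mod_cast ht0.ne') hv00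
    apply hζ1
    have : (t : ℂ) * v₀ * ζ = (t : ℂ) * v₀ * 1 := by rw [← hhc', mul_one]
    exact mul_left_cancel₀ hne this
  · rw [hc, hc', hhc, hhc', mul_pow _ ζ, hζ.pow_eq_one, mul_one]
  · rw [hc, hhc, mul_pow, hv₀]
    have : Φ c₁ + (t : ℂ) ^ n * Φ c₁ = ((1 + t ^ n : ℝ) : ℂ) * Φ c₁ := by push_cast; ring
    have hp : 0 < t ^ n := by positivity
    rw [this, norm_mul, Complex.norm_real, Real.norm_of_nonneg (by positivity)]
    have : 0 < ‖Φ c₁‖ := norm_pos_iff.2 h0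
    nlinarith

lemma root_diff {P Φ : ℂ → ℂ} {d : ℕ} (hd : d ≠ 0) {Y : Set ℂ} (hY : IsOpen Y)
    (hP : Differentiable ℂ P) (hΦ : ContinuousOn Φ Y) (hΦP : ∀ c ∈ Y, Φ c ^ d = P c)
    (h0 : ∀ c ∈ Y, P c ≠ 0) : DifferentiableOn ℂ Φ Y := by
  intro c hc
  refine DifferentiableAt.differentiableWithinAt ?_
  have hΦ0 : Φ c ≠ 0 := by
    intro h
    have := hΦP c hc
    rw [h, zero_pow hd] at this
    exact h0 c hc this.symm
  have hst : HasStrictDerivAt (fun w : ℂ => w ^ d) (d * Φ c ^ (d-1)) (Φ c) := hasStrictDerivAt_pow d _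
  have hne : (d : ℂ) * Φ c ^ (d-1) ≠ 0 := mul_ne_zero (by exact_mod_cast hd) (pow_ne_zero _ hΦ0)
  have hl := hst.eventually_left_inverse hne
  have hinv := (hst.to_localInverse hne).hasDerivAt.differentiableAt
  have hcont : ContinuousAt Φ c := hΦ.continuousAt (hY.mem_nhds hc)
  rw [hΦP c hc] at hinv
  have hcomp := hinv.comp c (hP c)
  refine hcomp.congr_of_eventuallyEq ?_
  filter_upwards [hcont.eventually hl, hY.mem_nhds hc] with x hx hxY
  simp only [Function.comp]
  rw [← hΦP x hxY, hx]

lemma inj_infty {P Φ : ℂ → ℂ} {d : ℕ} (hd : d ≠ 0) {Y : Set ℂ} (hY : IsOpen Y)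
    (hlim : Tendsto (fun c => P c / c ^ d) (Bornology.cobounded ℂ) (𝓝 1))
    (hΦ : DifferentiableOn ℂ Φ Y) (hΦP : ∀ c ∈ Y, Φ c ^ d = P c)
    (hYinf : Y ∈ Bornology.cobounded ℂ) (h0 : ∀ c ∈ Y, P c ≠ 0) :
    ∃ ρ : ℝ, ∀ c c', ρ < ‖c‖ → ρ < ‖c'‖ → Φ c = Φ c' → c = c' := by
  let h : ℂ → ℂ := fun u => (u * Φ u⁻¹)⁻¹
  have hinv : Tendsto (fun u : ℂ => u⁻¹) (𝓝[≠] 0) (Bornology.cobounded ℂ) := tendsto_inv₀_nhdsNE_zero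
  have hYe : ∀ᶠ u in 𝓝[≠] (0:ℂ), u⁻¹ ∈ Y := hinv hYinf
  have hΦ0 : ∀ c ∈ Y, Φ c ≠ 0 := fun c hc hz => by
    have := hΦP c hc
    rw [hz, zero_pow hd] at this
    exact h0 c hc this.symm
  have hpow : Tendsto (fun u => h u ^ d) (𝓝[≠] 0) (𝓝 1) := by
    have := (hlim.comp hinv).inv₀ one_ne_zero
    rw [inv_one] at this
    refine this.congr' ?_
    filter_upwards [hYe, self_mem_nhdsWithin] with u hu hu0
    simp only [Function.comp, h, inv_pow, mul_pow, hΦP _ hu, div_inv_eq_mul]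
    rw [mul_comm]
  have hbd : ∀ᶠ u in 𝓝[≠] (0:ℂ), ‖h u‖ ≤ 2 := by
    have h2 : ∀ᶠ u in 𝓝[≠] (0:ℂ), ‖h u ^ d‖ < 2 :=
      hpow.norm.eventually_lt_const (by simp)
    filter_upwards [h2] with u hu
    by_contra! hgt
    rw [norm_pow] at hu
    have : ‖h u‖ ≤ ‖h u‖ ^ d := le_self_pow₀ (by linarith) hd
    linarith
  have hev := hYe.and hbd
  rw [eventually_nhdsWithin_iff, Metric.eventually_nhds_iff_ball] at hev
  obtain ⟨ε, hε, hball⟩ := hev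
  have hdiff : DifferentiableOn ℂ h (Metric.ball 0 ε \ {0}) := by
    rintro u ⟨hu, hu0⟩
    have hu0' : u ≠ 0 := hu0
    have hmem := (hball u hu hu0).1
    refine DifferentiableAt.differentiableWithinAt ?_
    have h1 : DifferentiableAt ℂ Φ u⁻¹ := hΦ.differentiableAt (hY.mem_nhds hmem)
    have h2 : DifferentiableAt ℂ (fun u => Φ u⁻¹) u :=
      DifferentiableAt.comp u h1 (differentiableAt_inv hu0')
    exact (differentiableAt_id.mul h2).inv (mul_ne_zero hu0' (hΦ0 _ hmem))
  have hrem := Complex.differentiableOn_update_limUnder_of_bddAbove (Metric.ball_mem_nhds (0:ℂ) hε)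
    hdiff ⟨2, by
      rintro _ ⟨u, ⟨hu, hu0⟩, rfl⟩
      exact (hball u hu hu0).2⟩
  set k := Function.update h 0 (limUnder (𝓝[≠] 0) h) with hk
  have hkan : AnalyticAt ℂ k 0 := hrem.analyticAt (Metric.ball_mem_nhds (0:ℂ) hε)
  have hkh : ∀ u, u ≠ 0 → k u = h u := fun u hu => by simp [hk, hu]
  have hk0 : k 0 ^ d = 1 := by
    have t1 : Tendsto (fun u => k u ^ d) (𝓝[≠] 0) (𝓝 (k 0 ^ d)) :=
      (hkan.continuousAt.tendsto.mono_left nhdsWithin_le_nhds).pow d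
    have t2 : Tendsto (fun u => k u ^ d) (𝓝[≠] 0) (𝓝 1) := by
      refine hpow.congr' ?_
      filter_upwards [self_mem_nhdsWithin] with u hu
      rw [hkh u hu]
    exact tendsto_nhds_unique t1 t2
  have hk0' : k 0 ≠ 0 := by
    intro hz
    rw [hz, zero_pow hd] at hk0
    exact zero_ne_one hk0
  let K : ℂ → ℂ := fun u => u * k u
  have hKan : AnalyticAt ℂ K 0 := analyticAt_id.mul hkan
  have hKd : HasDerivAt K (k 0) 0 := by
    have : HasDerivAt K _ 0 := (hasDerivAt_id (0:ℂ)).mul hkan.differentiableAt.hasDerivAt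
    convert this using 1
    simp
  have hKs : HasStrictDerivAt K (k 0) 0 := by
    have := hKan.hasStrictDerivAt
    rwa [hKd.deriv] at this
  obtain ⟨V, hV, hVi⟩ := strict_inj hKs hk0'
  obtain ⟨δ, hδ, hδV⟩ := Metric.mem_nhds_iff.1 hV
  refine ⟨δ⁻¹, fun c c' hc hc' hcc => ?_⟩
  have hin : ∀ x : ℂ, δ⁻¹ < ‖x‖ → x ≠ 0 ∧ x⁻¹ ∈ V := by
    intro x hx
    have hx0 : 0 < ‖x‖ := lt_trans (by positivity) hx
    refine ⟨norm_pos_iff.1 hx0, hδV ?_⟩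
    simp only [Metric.mem_ball, dist_zero_right, norm_inv]
    exact inv_lt_of_inv_lt₀ hδ hx
  have hKx : ∀ x : ℂ, x ≠ 0 → K x⁻¹ = (Φ x)⁻¹ := by
    intro x hx
    simp only [K]
    rw [hkh _ (inv_ne_zero hx)]
    simp only [h, inv_inv, mul_inv]
    rw [← mul_assoc, inv_mul_cancel₀ hx, one_mul]
  have := hVi (hin c hc).2 (hin c' hc').2 (by rw [hKx c (hin c hc).1, hKx c' (hin c' hc').1, hcc])
  exact inv_injective this

lemma lemniscate {P Φ : ℂ → ℂ} {d : ℕ} (hd : d ≠ 0) {S : ℝ} (hS : 0 < S)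
    (hP : Differentiable ℂ P)
    (hlim : Tendsto (fun c => P c / c ^ d) (Bornology.cobounded ℂ) (𝓝 1))
    (hΦc : ContinuousOn Φ {c | S < ‖P c‖}) (hΦP : ∀ c, S < ‖P c‖ → Φ c ^ d = P c) :
    IsPreconnected {c | ‖P c‖ ≤ S} := by
  have hPc : Continuous P := hP.continuous
  set Y : Set ℂ := {c | S < ‖P c‖} with hYdef
  have hY : IsOpen Y := isOpen_lt continuous_const hPc.norm
  have hP0 : ∀ c ∈ Y, P c ≠ 0 := fun c hc => norm_pos_iff.1 (hS.trans hc)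
  have hΦd : DifferentiableOn ℂ Φ Y := root_diff hd hY hP hΦc hΦP hP0
  have hΦ0 : ∀ c ∈ Y, Φ c ≠ 0 := fun c hc hz => by
    have := hΦP c hc
    rw [hz, zero_pow hd] at this
    exact hP0 c hc this.symm
  have hΦn : ∀ c ∈ Y, ‖Φ c‖ ^ d = ‖P c‖ := fun c hc => by rw [← norm_pow, hΦP c hc]
  -- P tends to infinity
  have hPinf : Tendsto (fun c => ‖P c‖) (Bornology.cobounded ℂ) atTop := by
    have h1 : Tendsto (fun c : ℂ => ‖c‖ / 2) (Bornology.cobounded ℂ) atTop :=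
      tendsto_norm_cobounded_atTop.atTop_div_const (by norm_num)
    refine tendsto_atTop_mono' _ ?_ h1
    have h2 : ∀ᶠ c in Bornology.cobounded ℂ, 1/2 < ‖P c / c ^ d‖ :=
      hlim.norm.eventually_const_lt (by norm_num)
    have h3 : ∀ᶠ c : ℂ in Bornology.cobounded ℂ, 1 ≤ ‖c‖ :=
      tendsto_norm_cobounded_atTop.eventually_ge_atTop 1
    filter_upwards [h2, h3] with c hc hc1
    rw [norm_div, norm_pow, lt_div_iff₀ (by positivity)] at hc
    have : ‖c‖ ≤ ‖c‖ ^ d := le_self_pow₀ hc1 hd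
    linarith
  have hKb : ∀ t : ℝ, Bornology.IsBounded {c | ‖P c‖ ≤ t} := by
    intro t
    have := hPinf.eventually_gt_atTop t
    rw [← Bornology.isCobounded_compl_iff]
    have h2 : {c | t < ‖P c‖} ∈ Bornology.cobounded ℂ := this
    convert h2 using 1
    rw [Bornology.isCobounded_def]
    congr!
    ext c; simp
  have hKc : ∀ t : ℝ, IsCompact {c | ‖P c‖ ≤ t} := fun t =>
    Metric.isCompact_of_isClosed_isBounded (isClosed_le hPc.norm continuous_const) (hKb t)
  have hYinf : Y ∈ Bornology.cobounded ℂ := hPinf.eventually_gt_atTop S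
  -- nonconstancy
  have hnc : ∀ c₁ ∈ Y, ¬ ∀ᶠ z in 𝓝 c₁, Φ z = Φ c₁ := by
    intro c₁ hc₁ hev
    have h1 : P =ᶠ[𝓝 c₁] fun _ => P c₁ := by
      filter_upwards [hev, hY.mem_nhds hc₁] with z hz hzY
      rw [← hΦP z hzY, hz, hΦP c₁ hc₁]
    have hPan : AnalyticOnNhd ℂ P univ := fun z _ => hP.analyticAt z
    have h2 := hPan.eq_of_eventuallyEq analyticOnNhd_const h1
    have h3 := hPinf.eventually_gt_atTop ‖P c₁‖
    obtain ⟨x, hx⟩ := h3.exists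
    have h4 := (congrFun h2 x : P x = P c₁)
    rw [h4] at hx
    exact lt_irrefl _ hx
  have hopen : ∀ c₁ ∈ Y, 𝓝 (Φ c₁) ≤ map Φ (𝓝 c₁) := fun c₁ hc₁ =>
    ((hΦd.analyticAt (hY.mem_nhds hc₁)).eventually_constant_or_nhds_le_map_nhds).resolve_left
      (hnc c₁ hc₁)
  -- injectivity
  have hinj : ∀ a ∈ Y, ∀ b ∈ Y, Φ a = Φ b → a = b := by
    obtain ⟨ρ, hρ⟩ := inj_infty hd hY hlim hΦd hΦP hYinf hP0
    by_contra! hcon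
    obtain ⟨a, ha, b, hb, hab, hne⟩ := hcon
    set T : Set (ℂ × ℂ) := {p | p.1 ≠ p.2 ∧ ‖P a‖ ≤ ‖P p.1‖ ∧ ‖P a‖ ≤ ‖P p.2‖ ∧ Φ p.1 = Φ p.2} with hT
    have hTY : ∀ c, ‖P a‖ ≤ ‖P c‖ → c ∈ Y := fun c hc => lt_of_lt_of_le ha hc
    have haT : (a, b) ∈ T := ⟨hne, le_rfl, by
      show ‖P a‖ ≤ ‖P b‖
      rw [← hΦP a ha, ← hΦP b hb, hab], hab⟩
    obtain ⟨C, hC⟩ : ∃ C, ∀ c, ‖c‖ ≤ ρ → ‖P c‖ ≤ C := by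
      obtain ⟨C, hC⟩ := (isCompact_closedBall (0:ℂ) ρ).exists_bound_of_continuousOn hPc.continuousOn
      exact ⟨C, fun c hc => hC c (by simpa using hc)⟩
    have hTb : T ⊆ {c | ‖P c‖ ≤ C} ×ˢ {c | ‖P c‖ ≤ C} := by
      rintro ⟨x, y⟩ ⟨h1, h2, h3, h4⟩
      simp only at h1 h2 h3 h4
      have hxy : ‖P x‖ = ‖P y‖ := by rw [← hΦP x (hTY x h2), ← hΦP y (hTY y h3), h4]
      have : ‖P x‖ ≤ C := by
        by_cases hx : ‖x‖ ≤ ρ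
        · exact hC x hx
        · by_cases hy : ‖y‖ ≤ ρ
          · rw [hxy]; exact hC y hy
          · exact absurd (hρ x y (not_le.1 hx) (not_le.1 hy) h4) h1
      exact ⟨this, by rw [hxy] at this; exact this⟩
    have hTc : IsCompact (closure T) :=
      ((hKc C).prod (hKc C)).closure_of_subset hTb
    obtain ⟨⟨c₁, c₂⟩, hcT, hmax⟩ := hTc.exists_isMaxOn ⟨_, subset_closure haT⟩
      (f := fun p : ℂ × ℂ => ‖P p.1‖) (by fun_prop)
    have hc1 : ‖P a‖ ≤ ‖P c₁‖ := by
      have : closure T ⊆ {p : ℂ × ℂ | ‖P a‖ ≤ ‖P p.1‖} :=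
        closure_minimal (fun p hp => hp.2.1) (isClosed_le continuous_const (by fun_prop))
      exact this hcT
    have hc2 : ‖P a‖ ≤ ‖P c₂‖ := by
      have : closure T ⊆ {p : ℂ × ℂ | ‖P a‖ ≤ ‖P p.2‖} :=
        closure_minimal (fun p hp => hp.2.2.1) (isClosed_le continuous_const (by fun_prop))
      exact this hcT
    have hc1Y := hTY c₁ hc1
    have hc2Y := hTY c₂ hc2
    have hcc : Φ c₁ = Φ c₂ := by
      obtain ⟨F, hF, hFl⟩ := mem_closure_iff_ultrafilter.1 hcT
      have t1 : Tendsto (fun p : ℂ × ℂ => p.1) F (𝓝 c₁) := (continuous_fst.tendsto (c₁, c₂)).mono_left hFl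
      have t2 : Tendsto (fun p : ℂ × ℂ => p.2) F (𝓝 c₂) := (continuous_snd.tendsto (c₁, c₂)).mono_left hFl
      have t3 := (hΦc.continuousAt (hY.mem_nhds hc1Y)).tendsto.comp t1
      have t4 := (hΦc.continuousAt (hY.mem_nhds hc2Y)).tendsto.comp t2
      refine tendsto_nhds_unique (t3.congr' ?_) t4
      filter_upwards [hF] with p hp using hp.2.2.2
    -- it suffices to find a better pair
    have hfin : ∀ x ∈ Y, ∀ y ∈ Y, x ≠ y → Φ x = Φ y → ‖Φ c₁‖ < ‖Φ x‖ → False := by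
      intro x hx y hy hxy he hlt
      have h1 : ‖P c₁‖ < ‖P x‖ := by
        rw [← hΦn _ hc1Y, ← hΦn _ hx]
        exact pow_lt_pow_left₀ hlt (norm_nonneg _) hd
      have h2 : ‖P x‖ = ‖P y‖ := by rw [← hΦP x hx, ← hΦP y hy, he]
      have hm : (x, y) ∈ T := ⟨hxy, hc1.trans h1.le, by rw [← h2]; exact hc1.trans h1.le, he⟩
      have := hmax (subset_closure hm)
      simp only [mem_ofPred_eq] at this
      linarith
    by_cases h12 : c₁ = c₂
    · subst h12
      obtain ⟨x, hx, y, hy, hxy, he, hlt⟩ := fold_lemma (hΦd.analyticAt (hY.mem_nhds hc1Y))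
        (hnc c₁ hc1Y) (hΦ0 c₁ hc1Y) (by
          intro V hV hVi
          obtain ⟨p, hpV, hpT⟩ := mem_closure_iff_nhds.1 hcT (V ×ˢ V) (prod_mem_nhds hV hV)
          exact hpT.1 (hVi hpV.1 hpV.2 hpT.2.2.2)) Y (hY.mem_nhds hc1Y)
      exact hfin x hx y hy hxy he hlt
    · obtain ⟨U, V, hU, hV, hcU, hcV, hUV⟩ := t2_separation h12
      have i1 : Φ '' (U ∩ Y) ∈ 𝓝 (Φ c₁) :=
        hopen c₁ hc1Y (image_mem_map (inter_mem (hU.mem_nhds hcU) (hY.mem_nhds hc1Y)))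
      have i2 : Φ '' (V ∩ Y) ∈ 𝓝 (Φ c₁) := by
        rw [hcc]
        exact hopen c₂ hc2Y (image_mem_map (inter_mem (hV.mem_nhds hcV) (hY.mem_nhds hc2Y)))
      have hcont : Tendsto (fun t : ℝ => ((1 + t : ℝ) : ℂ) * Φ c₁) (𝓝[>] 0) (𝓝 (Φ c₁)) := by
        have : Continuous (fun t : ℝ => ((1 + t : ℝ) : ℂ) * Φ c₁) := by fun_prop
        have h := this.tendsto 0
        simp only [add_zero, Complex.ofReal_one, one_mul] at h
        exact h.mono_left nhdsWithin_le_nhds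
      obtain ⟨t, ht, ht0⟩ := ((hcont.eventually_mem (inter_mem i1 i2)).and self_mem_nhdsWithin).exists
      obtain ⟨⟨x, ⟨hxU, hxY⟩, hx⟩, ⟨y, ⟨hyV, hyY⟩, hy⟩⟩ := ht
      have ht0' : (0:ℝ) < t := ht0
      refine hfin x hxY y hyY (fun h => ?_) (hx.trans hy.symm) ?_
      · exact disjoint_left.1 hUV hxU (h ▸ hyV)
      · rw [hx, norm_mul, Complex.norm_real, Real.norm_of_nonneg (by positivity)]
        have : 0 < ‖Φ c₁‖ := norm_pos_iff.2 (hΦ0 c₁ hc1Y)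
        nlinarith
  -- connectedness
  rw [isPreconnected_iff_subset_of_fully_disjoint_closed (isClosed_le hPc.norm continuous_const)]
  intro u v hu hv huv hdis
  by_contra! hcon
  obtain ⟨hnu, hnv⟩ := hcon
  obtain ⟨b, hbK, hbu⟩ := not_subset.1 hnu
  obtain ⟨a, haK, hav⟩ := not_subset.1 hnv
  have hau : a ∈ u := (huv haK).resolve_right hav
  have hbv : b ∈ v := (huv hbK).resolve_left hbu
  obtain ⟨UA, UB, hUA, hUB, huA, hvB, hUAB⟩ := normal_separation hu hv hdis
  -- find t
  obtain ⟨t, htS, ht⟩ : ∃ t, S < t ∧ {c | ‖P c‖ ≤ t} ⊆ UA ∪ UB := by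
    have hcomp : IsCompact ({c | ‖P c‖ ≤ S + 1} \ (UA ∪ UB)) := (hKc _).diff (hUA.union hUB)
    rcases ({c | ‖P c‖ ≤ S + 1} \ (UA ∪ UB)).eq_empty_or_nonempty with he | hne
    · exact ⟨S+1, by linarith, sdiff_eq_empty.1 he⟩
    · obtain ⟨m, hm, hmin⟩ := hcomp.exists_isMinOn hne hPc.norm.continuousOn
      have hmS : S < ‖P m‖ := by
        by_contra! hle
        exact hm.2 (union_subset_union huA hvB (huv hle))
      refine ⟨(S + ‖P m‖) / 2, by linarith, fun c hc => ?_⟩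
      by_contra hcU
      have hm1 : ‖P m‖ ≤ S + 1 := hm.1
      have hc' : ‖P c‖ ≤ (S + ‖P m‖) / 2 := hc
      have hcS : c ∈ {c | ‖P c‖ ≤ S + 1} \ (UA ∪ UB) := ⟨by show ‖P c‖ ≤ S + 1; linarith, hcU⟩
      have := hmin hcS
      simp only [mem_ofPred_eq] at this
      linarith
  set W : Set ℂ := {w | ‖w‖ ∈ {r : ℝ | 0 ≤ r ∧ S < r ^ d ∧ r ^ d < t}} with hW
  have hWpre : IsPreconnected W := by
    refine norm_mem_preconn _ ?_ (fun r hr => hr.1)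
    apply OrdConnected.isPreconnected
    refine ⟨fun x hx y hy z hz => ⟨hx.1.trans hz.1, ?_, ?_⟩⟩
    · exact hx.2.1.trans_le (pow_le_pow_left₀ hx.1 hz.1 d)
    · exact (pow_le_pow_left₀ (hx.1.trans hz.1) hz.2 d).trans_lt hy.2.2
  have key : ∀ U U' : Set ℂ, IsOpen U → IsOpen U' → Disjoint U U' → {c | ‖P c‖ ≤ t} ⊆ U ∪ U' →
      (∃ a ∈ U, ‖P a‖ ≤ S) → (∃ b ∈ U', ‖P b‖ ≤ S) →
      W.Nonempty ∧ W ⊆ Φ '' {c | c ∈ U ∧ S < ‖P c‖ ∧ ‖P c‖ < t} := by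
    rintro U U' hU hU' hUU htU ⟨a, haU, haS⟩ ⟨b, hbU, hbS⟩
    set I : Set ℂ := {c | c ∈ U ∧ S < ‖P c‖ ∧ ‖P c‖ < t} with hI
    have hIW : ∀ c ∈ I, Φ c ∈ W := by
      rintro c ⟨-, h1, h2⟩
      refine ⟨norm_nonneg _, ?_, ?_⟩
      · rw [hΦn c h1]; exact h1
      · rw [hΦn c h1]; exact h2
    have hIne : I.Nonempty := by
      by_contra! hIe
      have e1 : U ∩ {c | ‖P c‖ < t} = {c | ‖P c‖ ≤ S} \ U' := by
        ext c
        constructor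
        · rintro ⟨h1, h2⟩
          refine ⟨?_, disjoint_left.1 hUU h1⟩
          by_contra hS'
          have : c ∈ I := ⟨h1, not_le.1 hS', h2⟩
          rw [hIe] at this
          exact this
        · rintro ⟨h1, h2⟩
          have h1' : ‖P c‖ ≤ S := h1
          exact ⟨(htU (h1'.trans htS.le)).resolve_right h2, lt_of_le_of_lt h1' htS⟩
      have hclopen : IsClopen (U ∩ {c | ‖P c‖ < t}) := by
        constructor
        · rw [e1]
          exact ((hKc S).diff hU').isClosed
        · exact hU.inter (isOpen_lt hPc.norm continuous_const)
      rcases isClopen_iff.1 hclopen with h | h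
      · have : a ∈ U ∩ {c | ‖P c‖ < t} := ⟨haU, lt_of_le_of_lt haS htS⟩
        rw [h] at this
        exact this
      · have : b ∈ U ∩ {c | ‖P c‖ < t} := by rw [h]; exact mem_univ _
        exact disjoint_left.1 hUU this.1 hbU
    obtain ⟨i, hi⟩ := hIne
    refine ⟨⟨_, hIW i hi⟩, ?_⟩
    have hIo : IsOpen I := hU.inter ((isOpen_lt continuous_const hPc.norm).inter
      (isOpen_lt hPc.norm continuous_const))
    have himo : IsOpen (Φ '' I) := by
      rw [isOpen_iff_mem_nhds]
      rintro _ ⟨c, hc, rfl⟩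
      exact hopen c hc.2.1 (image_mem_map (hIo.mem_nhds hc))
    have hcl : closure (Φ '' I) ∩ W ⊆ Φ '' I := by
      rintro w ⟨hw, hwW⟩
      obtain ⟨F, hF, hFl⟩ := mem_closure_iff_ultrafilter.1 hw
      have hFim : Φ '' I ∈ (F : Filter ℂ) := hF
      -- choose preimages
      have hch : ∀ y, ∃ c, y ∈ Φ '' I → c ∈ I ∧ Φ c = y := by
        intro y
        by_cases hy : y ∈ Φ '' I
        · obtain ⟨c, hc⟩ := hy
          exact ⟨c, fun _ => hc⟩
        · exact ⟨0, fun h => absurd h hy⟩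
      choose q hq using hch
      have hcompact : IsCompact ({c | ‖P c‖ ≤ t} \ U') := (hKc t).diff hU'
      have hqK : ({c | ‖P c‖ ≤ t} \ U') ∈ (F.map q : Filter ℂ) := by
        show _ ∈ (F : Filter ℂ)
        filter_upwards [hFim] with y hy
        have := (hq y hy).1
        exact ⟨this.2.2.le, disjoint_left.1 hUU this.1⟩
      obtain ⟨c, hcK, hcF⟩ := hcompact.ultrafilter_le_nhds (F.map q) (le_principal_iff.2 hqK)
      have tq : Tendsto q F (𝓝 c) := hcF
      have tid : Tendsto (fun y : ℂ => y) F (𝓝 w) := hFl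
      have hpw : P c = w ^ d := by
        have t1 : Tendsto (fun y => P (q y)) F (𝓝 (P c)) := (hPc.tendsto c).comp tq
        refine tendsto_nhds_unique t1 ((tid.pow d).congr' ?_)
        filter_upwards [hFim] with y hy
        obtain ⟨h1, h2⟩ := hq y hy
        rw [← hΦP _ h1.2.1, h2]
      have hPn : ‖P c‖ = ‖w‖ ^ d := by rw [hpw, norm_pow]
      have hcI : c ∈ I := by
        refine ⟨(htU hcK.1).resolve_right hcK.2, ?_, ?_⟩
        · rw [hPn]; exact hwW.2.1
        · rw [hPn]; exact hwW.2.2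
      refine ⟨c, hcI, ?_⟩
      have t1 : Tendsto (fun y => Φ (q y)) F (𝓝 (Φ c)) :=
        (hΦc.continuousAt (hY.mem_nhds hcI.2.1)).tendsto.comp tq
      refine tendsto_nhds_unique t1 (tid.congr' ?_)
      filter_upwards [hFim] with y hy
      exact ((hq y hy).2).symm
    exact hWpre.subset_of_closure_inter_subset himo ⟨_, hIW i hi, ⟨i, hi, rfl⟩⟩ hcl
  obtain ⟨⟨w, hw⟩, h1⟩ := key UA UB hUA hUB hUAB ht ⟨a, huA hau, haK⟩ ⟨b, hvB hbv, hbK⟩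
  obtain ⟨-, h2⟩ := key UB UA hUB hUA hUAB.symm (by rwa [union_comm]) ⟨b, hvB hbv, hbK⟩ ⟨a, huA hau, haK⟩
  obtain ⟨x, hx, hxw⟩ := h1 hw
  obtain ⟨y, hy, hyw⟩ := h2 hw
  have := hinj x hx.2.1 y hy.2.1 (hxw.trans hyw.symm)
  exact disjoint_left.1 hUAB hx.1 (this ▸ hy.1)

lemma MP_lim (n : ℕ) : Tendsto (fun c => MP (n+1) c / c ^ (2 ^ n)) (Bornology.cobounded ℂ) (𝓝 1) := by
  have hne : ∀ᶠ c : ℂ in Bornology.cobounded ℂ, c ≠ 0 := by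
    filter_upwards [tendsto_norm_cobounded_atTop.eventually_gt_atTop (0:ℝ)] with c hc
    exact norm_pos_iff.1 hc
  induction n with
  | zero =>
    refine tendsto_const_nhds.congr' ?_
    filter_upwards [hne] with c hc
    simp [MP_one, div_self hc]
  | succ n ih =>
    have hinv : Tendsto (fun c : ℂ => c⁻¹) (Bornology.cobounded ℂ) (𝓝 0) := tendsto_inv₀_cobounded
    have h1 : Tendsto (fun c : ℂ => (MP (n+1) c / c ^ (2 ^ n)) ^ 2 + c⁻¹ ^ (2 ^ (n+1) - 1))
        (Bornology.cobounded ℂ) (𝓝 (1 ^ 2 + 0 ^ (2 ^ (n+1) - 1))) := (ih.pow 2).add (hinv.pow _)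
    have hpos : 2 ^ (n+1) - 1 ≠ 0 := by
      have : 1 ≤ 2 ^ n := Nat.one_le_two_pow
      rw [pow_succ]; omega
    rw [zero_pow hpos, add_zero, one_pow] at h1
    refine h1.congr' ?_
    filter_upwards [hne] with c hc
    rw [MP_succ (n+1), add_div, div_pow, ← pow_mul, ← pow_succ, inv_pow]
    congr 1
    obtain ⟨m, hm⟩ : ∃ m, 2 ^ (n+1) = m + 1 := ⟨2 ^ (n+1) - 1, by omega⟩
    rw [hm, Nat.add_sub_cancel, pow_succ]
    field_simp

lemma level_preconn (N : ℕ) (hN : N ≠ 0) : IsPreconnected {c | ‖MP (N+1) c‖ ≤ 6} := by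
  obtain ⟨Φ, hΦc, hΦ⟩ := Phi_exists N
  have hsub : ∀ c, 6 < ‖MP (N+1) c‖ → 2 < ‖MP N c‖ := by
    intro c hc
    by_contra! hle
    have h1 : ‖c‖ ≤ 2 := by
      by_contra! hgt
      cases N with
      | zero => exact hN rfl
      | succ n => linarith [MP_ge c hgt n]
    have h2 : ‖MP (N+1) c‖ ≤ ‖MP N c‖ ^ 2 + ‖c‖ := by
      rw [MP_succ, ← norm_pow]; exact norm_add_le _ _
    nlinarith [norm_nonneg (MP N c)]
  exact lemniscate (d := 2 ^ N) (by positivity) (by norm_num) (MP_diff _) (MP_lim N)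
    (hΦc.mono hsub) (fun c hc => hΦ c (hsub c hc))

lemma mandelbrot_isPreconnected : IsPreconnected mandelbrot := by
  have hanti : ∀ n m c, n ≤ m → ‖MP m c‖ ≤ 6 → ‖MP n c‖ ≤ 6 := by
    intro n m c hnm hm
    by_contra! hgt
    have := MP_mono (n := n) (c := c) (by linarith) hnm
    linarith
  have hmem : ∀ c, c ∈ mandelbrot ↔ ∀ n, ‖MP (n+2) c‖ ≤ 6 := by
    intro c
    constructor
    · intro h n
      exact ((mem_mandelbrot_iff c).1 h _).trans (by norm_num)
    · intro h
      refine ⟨6, fun n => hanti n (n+2) c (by omega) (h n)⟩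
  rw [isPreconnected_iff_subset_of_fully_disjoint_closed mandelbrot_isCompact.isClosed]
  intro u v hu hv huv hdis
  obtain ⟨U, V, hU, hV, huU, hvV, hUV⟩ := normal_separation hu hv hdis
  obtain ⟨n, hn⟩ : ∃ n, {c | ‖MP (n+2) c‖ ≤ 6} ⊆ U ∪ V := by
    by_contra! hcon
    have hcl : ∀ n, IsClosed ({c | ‖MP (n+2) c‖ ≤ 6} \ (U ∪ V)) := fun n =>
      (isClosed_le (MP_cont _).norm continuous_const).sdiff (hU.union hV)
    have hsub : ∀ n, ({c | ‖MP (n+2) c‖ ≤ 6} \ (U ∪ V)) ⊆ Metric.closedBall 0 6 := by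
      rintro n c ⟨hc, -⟩
      have := hanti 1 (n+2) c (by omega) hc
      rw [MP_one] at this
      simpa using this
    obtain ⟨c, hc⟩ := IsCompact.nonempty_iInter_of_sequence_nonempty_isCompact_isClosed
      (fun n => {c | ‖MP (n+2) c‖ ≤ 6} \ (U ∪ V))
      (fun n c hc => ⟨hanti _ _ c (by omega) hc.1, hc.2⟩)
      (fun n => nonempty_of_not_subset (hcon n))
      ((isCompact_closedBall (0:ℂ) 6).of_isClosed_subset (hcl 0) (hsub 0)) hcl
    rw [mem_iInter] at hc
    have hcM : c ∈ mandelbrot := (hmem c).2 fun n => (hc n).1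
    exact (hc 0).2 (union_subset_union huU hvV (huv hcM))
  have hsubM : mandelbrot ⊆ {c | ‖MP (n+2) c‖ ≤ 6} := fun c hc => (hmem c).1 hc n
  have hpre := level_preconn (n+1) (by omega)
  rcases hpre.subset_or_subset hU hV hUV hn with h | h
  · left
    intro c hc
    refine (huv hc).resolve_right fun hcv => ?_
    exact disjoint_left.1 hUV (h (hsubM hc)) (hvV hcv)
  · right
    intro c hc
    refine (huv hc).resolve_left fun hcu => ?_
    exact disjoint_left.1 hUV (huU hcu) (h (hsubM hc))

/-- The Mandelbrot set is compact, connected, and full (its complement is connected). -/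
theorem mandelbrot_compact_connected_full :
    IsCompact mandelbrot ∧ IsConnected mandelbrot ∧ IsConnected mandelbrotᶜ := by
  exact ⟨mandelbrot_isCompact, ⟨⟨0, zero_mem_mandelbrot⟩, mandelbrot_isPreconnected⟩,
    mandelbrot_compl_isConnected⟩
end

section
/- If φ : Λ × X → ℂ is a holomorphic motion of a set X ⊂ ℂ over a connected open set Λ ⊂ ℂ with basepoint λ₀, then φ extends uniquely to a holomorphic motion of the closure of X, and for each λ the map φ_λ restricted to the closure of X is continuous and injective. -/
/-- `φ` is a holomorphic motion of `X ⊆ ℂ` over `Λ` with center `l₀`. -/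
def IsHolomorphicMotion (Λ : Set ℂ) (l₀ : ℂ) (X : Set ℂ) (φ : ℂ → ℂ → ℂ) : Prop :=
  (∀ z ∈ X, DifferentiableOn ℂ (fun l => φ l z) Λ) ∧
  (∀ l ∈ Λ, Set.InjOn (φ l) X) ∧
  (∀ z ∈ X, φ l₀ z = z)

open Metric Set Complex

lemma hm_exists_log {f : ℂ → ℂ} {c : ℂ} {r : ℝ} (hr : 0 < r)
    (hf : DifferentiableOn ℂ f (ball c r)) (h0 : ∀ z ∈ ball c r, f z ≠ 0) :
    ∃ g : ℂ → ℂ, DifferentiableOn ℂ g (ball c r) ∧ g c = Complex.log (f c) ∧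
      ∀ z ∈ ball c r, Complex.exp (g z) = f z := by
  have hd : DifferentiableOn ℂ (fun z => deriv f z / f z) (ball c r) :=
    (hf.deriv isOpen_ball).div hf h0
  obtain ⟨g, hgc, hg⟩ := hd.isExactOn_ball.with_val_at c (Complex.log (f c))
  have hc : c ∈ ball c r := mem_ball_self hr
  refine ⟨g, fun z hz => (hg z hz).differentiableAt.differentiableWithinAt, hgc, ?_⟩
  have hder : ∀ z ∈ ball c r, HasDerivAt (fun z => f z * Complex.exp (-g z)) 0 z := by
    intro z hz
    have h1 := ((hf z hz).differentiableAt (isOpen_ball.mem_nhds hz)).hasDerivAt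
    have h2 := (hg z hz).neg.cexp
    have h3 := h1.mul h2
    have h4 := h0 z hz
    have h5 : deriv f z * Complex.exp ((-g) z) +
        f z * (Complex.exp ((-g) z) * -(deriv f z / f z)) = 0 := by
      field_simp
      ring
    rw [h5] at h3
    exact h3
  have hconst : ∀ z ∈ ball c r, f z * Complex.exp (-g z) = f c * Complex.exp (-g c) := by
    intro z hz
    apply isOpen_ball.is_const_of_deriv_eq_zero (convex_ball c r).isPreconnected
      (fun z hz => (hder z hz).differentiableAt.differentiableWithinAt)
      (fun z hz => (hder z hz).deriv) hz hc
  intro z hz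
  have h := hconst z hz
  rw [hgc, Complex.exp_neg (Complex.log _), Complex.exp_log (h0 c hc), mul_inv_cancel₀ (h0 c hc),
    Complex.exp_neg] at h
  field_simp [Complex.exp_ne_zero] at h
  exact h.symm

lemma hm_harnack {h : ℂ → ℂ} {c : ℂ} {r M : ℝ} (hr : 0 < r)
    (hf : DifferentiableOn ℂ h (ball c r)) (h0 : ∀ z ∈ ball c r, h z ≠ 0)
    (hM : ∀ z ∈ ball c r, ‖h z‖ < M) {z : ℂ} (hz : z ∈ ball c (r / 4)) :
    ‖h z‖ ^ 3 ≤ M ^ 2 * ‖h c‖ ∧ ‖h c‖ ^ 3 ≤ M ^ 2 * ‖h z‖ := by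
  have hc : c ∈ ball c r := mem_ball_self hr
  have hM0 : 0 < M := (norm_nonneg _).trans_lt (hM c hc)
  obtain ⟨g, hg, -, hge⟩ := hm_exists_log hr hf h0
  have hre : ∀ w ∈ ball c r, ‖h w‖ = Real.exp (g w).re := fun w hw => by
    rw [← hge w hw, Complex.norm_exp]
  have hML : M = Real.exp (Real.log M) := (Real.exp_log hM0).symm
  set L := Real.log M with hL
  have hlt : ∀ w ∈ ball c r, (g w).re < L := fun w hw => by
    have := hM w hw
    rw [hre w hw, hML] at this
    exact Real.exp_lt_exp.1 this
  have hz' : z ∈ ball c r := ball_subset_ball (by linarith) hz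
  have hmaps : MapsTo (fun w : ℂ => c + w) (ball 0 r) (ball c r) := by
    intro w hw; simpa using hw
  have key := borelCaratheodory_zero (f := fun w => g (c + w) - g c) (M := L - (g c).re) (R := r)
    (z := z - c) (by linarith [hlt c hc])
    ((hg.comp (by fun_prop) hmaps).sub_const _)
    (by intro w hw; simp only [mem_ofPred_eq, sub_re]; linarith [hlt _ (hmaps hw)])
    hr (by simpa [dist_eq_norm] using hz') (by simp)
  simp only [add_sub_cancel] at key
  have hzn : ‖z - c‖ < r / 4 := by simpa [dist_eq_norm] using hz
  have hm : 0 < L - (g c).re := by linarith [hlt c hc]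
  have k2 : ‖g z - g c‖ ≤ 2 / 3 * (L - (g c).re) := by
    refine key.trans ?_
    rw [div_le_iff₀ (by linarith)]
    nlinarith [norm_nonneg (z - c)]
  have k3 := (abs_le.1 ((Complex.abs_re_le_norm _).trans k2))
  simp only [sub_re] at k3
  rw [hre z hz', hre c hc, hML, ← Real.exp_nat_mul, ← Real.exp_nat_mul, ← Real.exp_nat_mul,
    ← Real.exp_add, ← Real.exp_add, Real.exp_le_exp, Real.exp_le_exp]
  have := hlt z hz'
  push_cast
  constructor <;> linarith

lemma hm_bloch {f : ℂ → ℂ} {U : Set ℂ} (hU : IsOpen U) (hf : DifferentiableOn ℂ f U)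
    {c : ℂ} {R : ℝ} (hR : 0 < R) (hcU : closedBall c R ⊆ U) (hfc : deriv f c ≠ 0) :
    ∃ w, ball w (R * ‖deriv f c‖ / 48) ⊆ f '' closedBall c R := by
  have hd : DifferentiableOn ℂ (deriv f) U := hf.deriv hU
  obtain ⟨p, hp, hmax⟩ := (isCompact_closedBall c R).exists_isMaxOn
    (f := fun z => ‖deriv f z‖ * (R - dist z c)) ⟨c, mem_closedBall_self hR.le⟩
    ((hd.continuousOn.mono hcU).norm.mul (by fun_prop))
  have hmax' : ∀ z ∈ closedBall c R,
    ‖deriv f z‖ * (R - dist z c) ≤ ‖deriv f p‖ * (R - dist p c) := fun z hz => hmax hz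
  have hN := hmax' c (mem_closedBall_self hR.le)
  simp only [dist_self, sub_zero] at hN
  have hfc' : 0 < ‖deriv f c‖ := norm_pos_iff.2 hfc
  have hpR : dist p c ≤ R := hp
  have hNpos : 0 < ‖deriv f p‖ * (R - dist p c) := lt_of_lt_of_le (by positivity) hN
  have hpp : 0 < R - dist p c := by
    rcases (sub_nonneg.2 hpR).eq_or_lt with h | h
    · rw [← h] at hNpos; simp at hNpos
    · exact h
  have hfp : 0 < ‖deriv f p‖ := by
    by_contra h
    have : ‖deriv f p‖ = 0 := le_antisymm (not_lt.1 h) (norm_nonneg _)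
    rw [this] at hNpos; simp at hNpos
  set A := ‖deriv f p‖ with hA
  obtain ⟨t, ht⟩ : ∃ t, t = (R - dist p c) / 2 := ⟨_, rfl⟩
  have htpos : 0 < t := by rw [ht]; linarith
  have hsub : ∀ z ∈ ball p t, z ∈ closedBall c R := by
    intro z hz
    have : dist z p < t := hz
    have := dist_triangle z p c
    simp only [mem_closedBall]; linarith
  have hbd : ∀ z ∈ ball p t, ‖deriv f z‖ ≤ 2 * A := by
    intro z hz
    have h1 := hmax' z (hsub z hz)
    have h2 : dist z p < t := hz
    have h3 := dist_triangle z p c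
    have h4 : t ≤ R - dist z c := by linarith
    have h5 : ‖deriv f z‖ * t ≤ A * (2 * t) := by
      calc _ ≤ ‖deriv f z‖ * (R - dist z c) := by gcongr
        _ ≤ _ := h1.trans_eq (by rw [ht]; ring)
    nlinarith
  have hsch : ∀ z ∈ ball p t, ‖deriv f z - deriv f p‖ ≤ 3 * A / t * dist z p := by
    intro z hz
    rw [← dist_eq_norm]
    refine Complex.dist_le_div_mul_dist_of_mapsTo_ball
      (hd.mono fun w hw => hcU (hsub w hw)) ?_ hz
    intro w hw
    rw [mem_closedBall, dist_eq_norm]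
    have := norm_sub_le (deriv f w) (deriv f p)
    have := hbd w hw
    linarith
  have hsub2 : closedBall p (t / 6) ⊆ ball p t := closedBall_subset_ball (by linarith)
  have hda : ∀ z ∈ closedBall p (t / 6), DifferentiableAt ℂ f z := fun z hz =>
    (hf z (hcU (hsub z (hsub2 hz)))).differentiableAt (hU.mem_nhds (hcU (hsub z (hsub2 hz))))
  have hmv : ∀ z ∈ closedBall p (t / 6), ‖(f z - deriv f p * z) - (f p - deriv f p * p)‖
      ≤ A / 2 * ‖z - p‖ := by
    intro z hz
    refine (convex_closedBall p (t / 6)).norm_image_sub_le_of_norm_hasDerivWithin_le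
      (f := fun z => f z - deriv f p * z) (f' := fun z => deriv f z - deriv f p) (C := A / 2)
      (x := p) (y := z) ?_ ?_ (mem_closedBall_self (by positivity)) hz
    · intro w hw
      have := ((hda w hw).hasDerivAt.sub ((hasDerivAt_id w).const_mul (deriv f p)))
      rw [mul_one] at this
      exact this.hasDerivWithinAt
    · intro w hw
      refine (hsch w (hsub2 hw)).trans ?_
      have : dist w p ≤ t / 6 := hw
      calc 3 * A / t * dist w p ≤ 3 * A / t * (t / 6) := by gcongr
        _ = A / 2 := by field_simp; ring
  have hne : ∃ᶠ z in nhds p, f z ≠ f p := by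
    intro hcon
    have : f =ᶠ[nhds p] fun _ => f p := by
      filter_upwards [hcon] with z hz; simpa using hz
    have := this.deriv_eq
    simp at this
    rw [hA, this] at hfp; simp at hfp
  have hres := DiffContOnCl.ball_subset_image_closedBall (f := f) (z₀ := p) (r := t / 6)
    (ε := A * (t / 6) / 2)
    (DifferentiableOn.diffContOnCl fun z hz =>
      (hda z (closure_ball_subset_closedBall hz)).differentiableWithinAt)
    (by positivity) ?_ hne
  · refine ⟨f p, (ball_subset_ball ?_).trans (hres.trans (image_mono (hsub2.trans hsub)))⟩
    rw [ht]; linarith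
  · intro z hz
    have h1 := hmv z (sphere_subset_closedBall hz)
    have h2 : ‖z - p‖ = t / 6 := by simpa [dist_eq_norm] using hz
    have h3 : deriv f p * (z - p) = (f z - f p) -
      ((f z - deriv f p * z) - (f p - deriv f p * p)) := by ring
    have h4 : A * (t / 6) ≤ ‖f z - f p‖ + A / 2 * (t / 6) := by
      rw [← h2, hA, ← norm_mul, h3]
      refine (norm_sub_le _ _).trans ?_
      rw [← hA]; gcongr
    linarith

lemma hm_net (w : ℂ) : ∃ q ∈ ball w 3, ∃ n : ℤ, Complex.cosh q ^ 2 = n := by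
  have hreal : ∀ t : ℝ, 0 ≤ t → ∃ s ∈ Icc t (t + 1), ∃ n : ℤ, Real.cosh s ^ 2 = n := by
    intro t ht
    have h1 : Real.cosh t ^ 2 + 1 ≤ Real.cosh (t + 1) ^ 2 := by
      have a1 : 1 ≤ Real.sinh 1 := (Real.self_le_sinh_iff.2 zero_le_one)
      have a2 : 0 ≤ Real.sinh t := Real.sinh_nonneg_iff.2 ht
      have a3 := Real.one_le_cosh t
      have a4 := Real.cosh_sq 1
      have a5 := Real.one_le_cosh 1
      have a6 : Real.cosh t * Real.cosh 1 ≤ Real.cosh (t + 1) := by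
        rw [Real.cosh_add]; nlinarith
      have a7 : (Real.cosh t * Real.cosh 1) ^ 2 ≤ Real.cosh (t + 1) ^ 2 := by gcongr
      have a8 : 2 ≤ Real.cosh 1 ^ 2 := by nlinarith
      have a9 : 1 ≤ Real.cosh t ^ 2 := by nlinarith
      rw [mul_pow] at a7
      nlinarith
    have hiv := intermediate_value_Icc (f := fun s => Real.cosh s ^ 2) (a := t) (b := t + 1)
      (by linarith) (by fun_prop)
    obtain ⟨s, hs, hs2⟩ := hiv (show ((⌈Real.cosh t ^ 2⌉ : ℤ) : ℝ) ∈ _ from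
      ⟨Int.le_ceil _, by linarith [Int.ceil_lt_add_one (Real.cosh t ^ 2)]⟩)
    exact ⟨s, hs, _, hs2⟩
  have hre : ∃ s : ℝ, |s - w.re| ≤ 1 ∧ ∃ n : ℤ, Real.cosh s ^ 2 = n := by
    rcases le_total 0 w.re with h | h
    · obtain ⟨s, hs, n, hn⟩ := hreal _ h
      exact ⟨s, abs_le.2 ⟨by linarith [hs.1], by linarith [hs.2]⟩, n, hn⟩
    · obtain ⟨s, hs, n, hn⟩ := hreal (-w.re) (by linarith)
      exact ⟨-s, abs_le.2 ⟨by linarith [hs.2], by linarith [hs.1]⟩, n, by rwa [Real.cosh_neg]⟩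
  obtain ⟨s, hs, n, hn⟩ := hre
  set k : ℤ := round (w.im / Real.pi)
  have hk : |w.im - k * Real.pi| ≤ 2 - 1 / 10 := by
    have h1 := abs_sub_round (w.im / Real.pi)
    have h2 : w.im - k * Real.pi = (w.im / Real.pi - k) * Real.pi := by
      field_simp
    rw [h2, abs_mul, abs_of_pos Real.pi_pos]
    nlinarith [Real.pi_lt_d2, Real.pi_pos]
  refine ⟨(s : ℂ) + ((k * Real.pi : ℝ) : ℂ) * I, ?_, n, ?_⟩
  · rw [mem_ball, dist_eq_norm]
    refine (Complex.norm_le_abs_re_add_abs_im _).trans_lt ?_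
    simp only [sub_re, sub_im, add_re, add_im, ofReal_re, ofReal_im, re_ofReal_mul, im_ofReal_mul,
      I_re, I_im]
    rw [abs_sub_comm] at hk
    simp only [mul_zero, mul_one, add_zero, zero_add]
    linarith
  · rw [Complex.cosh_add, Complex.cosh_mul_I, Complex.sinh_mul_I, ← Complex.ofReal_sin,
      Real.sin_int_mul_pi]
    simp only [ofReal_zero, zero_mul, mul_zero, add_zero]
    rw [mul_pow, ← Complex.ofReal_cos, ← Complex.ofReal_cosh, ← Complex.ofReal_pow, hn,
      ← Complex.ofReal_pow]
    have : Real.cos (k * Real.pi) ^ 2 = 1 := by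
      have := Real.sin_sq_add_cos_sq (k * Real.pi)
      rw [Real.sin_int_mul_pi] at this; linarith
    rw [this]; simp

lemma hm_norm_log_le {z : ℂ} {B : ℝ} (hz : z ≠ 0) (h1 : ‖z‖ ≤ B) (h2 : ‖z‖⁻¹ ≤ B) :
    ‖Complex.log z‖ ≤ B + 4 := by
  have hp : 0 < ‖z‖ := norm_pos_iff.2 hz
  refine (Complex.norm_le_abs_re_add_abs_im _).trans ?_
  rw [Complex.log_re, Complex.log_im]
  have a1 := Complex.abs_arg_le_pi z
  have a2 : |Real.log ‖z‖| ≤ B := by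
    rw [abs_le]
    have b1 := Real.log_le_sub_one_of_pos hp
    have b2 := Real.log_le_sub_one_of_pos (inv_pos.2 hp)
    rw [Real.log_inv] at b2
    constructor <;> linarith
  linarith [Real.pi_lt_four]

lemma hm_norm_cosh_le (z : ℂ) : ‖Complex.cosh z‖ ≤ Real.exp ‖z‖ := by
  rw [Complex.cosh, norm_div, Complex.norm_ofNat, div_le_iff₀ two_pos]
  refine (norm_add_le _ _).trans ?_
  have h1 := Complex.norm_exp_le_exp_norm z
  have h2 := Complex.norm_exp_le_exp_norm (-z)
  rw [norm_neg] at h2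
  linarith

lemma hm_exists_sqrt {f : ℂ → ℂ} {c : ℂ} {r : ℝ} (hr : 0 < r)
    (hf : DifferentiableOn ℂ f (ball c r)) (h0 : ∀ z ∈ ball c r, f z ≠ 0) :
    ∃ g : ℂ → ℂ, DifferentiableOn ℂ g (ball c r) ∧ ∀ z ∈ ball c r, g z ^ 2 = f z := by
  obtain ⟨g, hg, -, hge⟩ := hm_exists_log hr hf h0
  refine ⟨fun z => Complex.exp (g z / 2), (hg.div_const 2).cexp, fun z hz => ?_⟩
  rw [← hge z hz, ← Complex.exp_nat_mul]
  congr 1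
  push_cast; ring

lemma hm_norm_le_of_sq {a : ℂ} {B : ℝ} (h : ‖a ^ 2‖ ≤ B) : ‖a‖ ≤ B + 1 := by
  rw [norm_pow] at h
  nlinarith [norm_nonneg a, sq_nonneg (‖a‖ - 1)]

lemma hm_landau {g : ℂ → ℂ} {c : ℂ} {r : ℝ} (hr : 0 < r)
    (hg : DifferentiableOn ℂ g (ball c r))
    (hn : ∀ z ∈ ball c r, ∀ n : ℤ, Complex.cosh (g z) ^ 2 ≠ n) :
    ∀ z ∈ closedBall c (r / 2), ‖g z - g c‖ ≤ 288 := by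
  have hsub : closedBall c (r / 2) ⊆ ball c r := closedBall_subset_ball (by linarith)
  have hder : ∀ z ∈ closedBall c (r / 2), ‖deriv g z‖ ≤ 576 / r := by
    intro z hz
    by_cases h0 : deriv g z = 0
    · rw [h0, norm_zero]; positivity
    have hs : closedBall z (r / 4) ⊆ ball c r := by
      intro w hw
      have h1 : dist w z ≤ r / 4 := hw
      have h2 : dist z c ≤ r / 2 := hz
      have := dist_triangle w z c
      rw [mem_ball]; linarith
    obtain ⟨w, hw⟩ := hm_bloch isOpen_ball hg (by positivity : 0 < r / 4) hs h0
    obtain ⟨q, hq, n, hqn⟩ := hm_net w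
    by_contra hcon
    rw [not_le, div_lt_iff₀ hr] at hcon
    obtain ⟨y, hy, rfl⟩ := hw (ball_subset_ball (by linarith) hq)
    exact hn y (hs hy) n hqn
  intro z hz
  have h1 := (convex_closedBall c (r / 2)).norm_image_sub_le_of_norm_hasDerivWithin_le
    (f := g) (f' := deriv g) (C := 576 / r) (x := c) (y := z)
    (fun w hw => ((hg w (hsub hw)).differentiableAt
      (isOpen_ball.mem_nhds (hsub hw))).hasDerivAt.hasDerivWithinAt)
    hder (mem_closedBall_self (by positivity)) hz
  refine h1.trans ?_
  have : ‖z - c‖ ≤ r / 2 := by simpa [dist_eq_norm] using hz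
  calc 576 / r * ‖z - c‖ ≤ 576 / r * (r / 2) := by gcongr
    _ = 288 := by field_simp; norm_num

lemma hm_schottky_aux (R : ℝ) : ∃ C : ℝ, ∀ (f : ℂ → ℂ) (c : ℂ) (r : ℝ), 0 < r →
    DifferentiableOn ℂ f (ball c r) → (∀ z ∈ ball c r, f z ≠ 0) → (∀ z ∈ ball c r, f z ≠ 1) →
    ‖f c‖ ≤ R → 1 / 2 ≤ ‖f c‖ → ∀ z ∈ closedBall c (r / 2), ‖f z‖ ≤ C := by
  let B : ℝ := R + 2 + 4
  let B' : ℝ := (B + 1) + (B + 1 + 1)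
  refine ⟨Real.exp (8 * (Real.exp (288 + (B' + 4))) ^ 2), ?_⟩
  intro f c r hr hf h0 h1 hR hhalf z hz
  have hc : c ∈ ball c r := mem_ball_self hr
  have hzr : z ∈ ball c r := closedBall_subset_ball (by linarith) hz
  obtain ⟨G, hG, hGc, hGe⟩ := hm_exists_log hr hf h0
  have h2pi : (2 * Real.pi * I : ℂ) ≠ 0 := Complex.two_pi_I_ne_zero
  have hn2pi : ‖(2 * Real.pi * I : ℂ)‖ = 2 * Real.pi := by
    simp [abs_of_pos Real.pi_pos]
  obtain ⟨F, hF⟩ : ∃ F : ℂ → ℂ, F = fun z => G z / (2 * Real.pi * I) := ⟨_, rfl⟩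
  have hFd : DifferentiableOn ℂ F (ball c r) := by rw [hF]; exact hG.div_const _
  have hFe : ∀ w ∈ ball c r, Complex.exp (F w * (2 * Real.pi * I)) = f w := fun w hw => by
    rw [hF]; simp only; rw [div_mul_cancel₀ _ h2pi, hGe w hw]
  have hFn : ∀ w ∈ ball c r, ∀ n : ℤ, F w ≠ n := by
    intro w hw n hn
    apply h1 w hw
    rw [← hFe w hw, hn, Complex.exp_int_mul_two_pi_mul_I]
  have hFc : ‖F c‖ ≤ B := by
    have a1 : ‖G c‖ ≤ (R + 2) + 4 := by
      rw [hGc]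
      refine hm_norm_log_le (h0 c hc) (by linarith) ?_
      have : ‖f c‖⁻¹ ≤ (1 / 2)⁻¹ := inv_anti₀ (by norm_num) hhalf
      norm_num at this
      have := norm_nonneg (f c)
      linarith
    rw [hF]; simp only
    rw [norm_div, hn2pi]
    exact (div_le_self (norm_nonneg _) (by linarith [Real.pi_gt_three])).trans a1
  obtain ⟨u, hu, hu2⟩ := hm_exists_sqrt hr hFd (fun w hw => by simpa using hFn w hw 0)
  obtain ⟨v, hv, hv2⟩ := hm_exists_sqrt hr (hFd.sub_const 1)
    (fun w hw => sub_ne_zero.2 (by simpa using hFn w hw 1))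
  have huv : ∀ w ∈ ball c r, (u w - v w) * (u w + v w) = 1 := fun w hw => by
    have := hu2 w hw; have := hv2 w hw; linear_combination (hu2 w hw) - (hv2 w hw)
  have hne : ∀ w ∈ ball c r, u w - v w ≠ 0 := fun w hw h => by
    have := huv w hw; rw [h, zero_mul] at this; exact zero_ne_one this
  obtain ⟨g, hg, hgc, hge⟩ := hm_exists_log hr (hu.sub hv) hne
  have hcosh : ∀ w ∈ ball c r, Complex.cosh (g w) ^ 2 = F w := fun w hw => by
    have e1 : Complex.exp (g w) = u w - v w := hge w hw
    have e2 : Complex.exp (-g w) = u w + v w := by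
      rw [Complex.exp_neg, e1]; exact inv_eq_of_mul_eq_one_right (huv w hw)
    rw [Complex.cosh, e1, e2, ← hu2 w hw]; ring
  have hl := hm_landau hr hg (fun w hw n => by rw [hcosh w hw]; exact hFn w hw n) z hz
  have huc : ‖u c‖ ≤ B + 1 := hm_norm_le_of_sq (by rw [hu2 c hc]; exact hFc)
  have hvc : ‖v c‖ ≤ B + 1 + 1 := hm_norm_le_of_sq (by
    rw [hv2 c hc]; exact (norm_sub_le _ _).trans (by rw [norm_one]; linarith))
  have hgcn : ‖g c‖ ≤ B' + 4 := by
    rw [hgc]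
    refine hm_norm_log_le (hne c hc) ((norm_sub_le _ _).trans (add_le_add huc hvc)) ?_
    simp only [Pi.sub_apply]
    rw [← norm_inv, inv_eq_of_mul_eq_one_right (huv c hc)]
    exact (norm_add_le _ _).trans (add_le_add huc hvc)
  have hgz : ‖g z‖ ≤ 288 + (B' + 4) := by
    have : g z = (g z - g c) + g c := by ring
    rw [this]; exact (norm_add_le _ _).trans (add_le_add hl hgcn)
  have hFz : ‖F z‖ ≤ Real.exp (288 + (B' + 4)) ^ 2 := by
    rw [← hcosh z hzr, norm_pow]
    gcongr
    exact (hm_norm_cosh_le _).trans (Real.exp_le_exp.2 hgz)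
  rw [← hFe z hzr]
  refine (Complex.norm_exp_le_exp_norm _).trans (Real.exp_le_exp.2 ?_)
  rw [norm_mul, hn2pi, mul_comm]
  gcongr
  linarith [Real.pi_lt_four]

lemma hm_schottky (R : ℝ) : ∃ C : ℝ, ∀ (f : ℂ → ℂ) (c : ℂ) (r : ℝ), 0 < r →
    DifferentiableOn ℂ f (ball c r) → (∀ z ∈ ball c r, f z ≠ 0) → (∀ z ∈ ball c r, f z ≠ 1) →
    ‖f c‖ ≤ R → ∀ z ∈ closedBall c (r / 2), ‖f z‖ ≤ C := by
  obtain ⟨C1, h1⟩ := hm_schottky_aux R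
  obtain ⟨C2, h2⟩ := hm_schottky_aux 2
  refine ⟨max C1 (1 + C2), ?_⟩
  intro f c r hr hf h0 hf1 hR z hz
  by_cases hh : 1 / 2 ≤ ‖f c‖
  · exact (h1 f c r hr hf h0 hf1 hR hh z hz).trans (le_max_left _ _)
  · push Not at hh
    have hlow : 1 / 2 ≤ ‖1 - f c‖ := by
      have := norm_sub_norm_le 1 (f c)
      rw [norm_one] at this; linarith
    have hup : ‖1 - f c‖ ≤ 2 := by
      have := norm_sub_le 1 (f c)
      rw [norm_one] at this; linarith
    have := h2 (fun w => 1 - f w) c r hr (hf.const_sub 1)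
      (fun w hw => sub_ne_zero.2 (hf1 w hw).symm)
      (fun w hw h => h0 w hw (by linear_combination -h)) hup hlow z hz
    refine le_trans ?_ (le_max_right _ _)
    have e : f z = 1 - (1 - f z) := by ring
    rw [e]
    refine (norm_sub_le _ _).trans ?_
    rw [norm_one]; linarith

lemma hm_local {Λ : Set ℂ} {l₀ : ℂ} {X : Set ℂ} {φ : ℂ → ℂ → ℂ}
    (hφ : IsHolomorphicMotion Λ l₀ X φ) {a b : ℂ} (ha : a ∈ X) (hb : b ∈ X) (hab : a ≠ b)
    {c : ℂ} {r : ℝ} (hr : 0 < r) (hsub : ball c r ⊆ Λ)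
    (hP : ∀ R : ℝ, ∃ C : ℝ, ∀ z ∈ X, ‖z‖ ≤ R → ‖φ c z‖ ≤ C) (R : ℝ) :
    ∃ C : ℝ, ∀ z ∈ X, ‖z‖ ≤ R → ∀ μ ∈ closedBall c (r / 2), ‖φ μ z‖ ≤ C := by
  obtain ⟨hd, hinj, -⟩ := hφ
  have hs2 : closedBall c (r / 2) ⊆ ball c r := closedBall_subset_ball (by linarith)
  obtain ⟨C0, hC0⟩ := hP R
  obtain ⟨Ca, hCa⟩ := (isCompact_closedBall c (r / 2)).exists_bound_of_continuousOn
    ((hd a ha).continuousOn.mono (hs2.trans hsub))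
  obtain ⟨Cb, hCb⟩ := (isCompact_closedBall c (r / 2)).exists_bound_of_continuousOn
    ((hd b hb).continuousOn.mono (hs2.trans hsub))
  obtain ⟨C1, hC1⟩ := hm_schottky ((C0 + Ca) / ‖φ c b - φ c a‖)
  have hcc : c ∈ closedBall c (r / 2) := mem_closedBall_self (by positivity)
  refine ⟨max (max Ca Cb) (C1 * (Cb + Ca) + Ca), ?_⟩
  intro z hz hzR μ hμ
  by_cases hza : z = a
  · subst hza; exact (hCa μ hμ).trans ((le_max_left _ _).trans (le_max_left _ _))
  by_cases hzb : z = b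
  · subst hzb; exact (hCb μ hμ).trans ((le_max_right _ _).trans (le_max_left _ _))
  refine le_trans ?_ (le_max_right _ _)
  have hne : ∀ w ∈ ball c r, φ w b - φ w a ≠ 0 := fun w hw h =>
    hab ((hinj w (hsub hw) hb ha (sub_eq_zero.1 h)).symm)
  have key := hC1 (fun w => (φ w z - φ w a) / (φ w b - φ w a)) c r hr
    ((((hd z hz).mono hsub).sub ((hd a ha).mono hsub)).div
      (((hd b hb).mono hsub).sub ((hd a ha).mono hsub)) hne)
    (fun w hw h => by
      rcases div_eq_zero_iff.1 h with h | h
      · exact hza (hinj w (hsub hw) hz ha (sub_eq_zero.1 h))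
      · exact hne w hw h)
    (fun w hw h => by
      rw [div_eq_one_iff_eq (hne w hw)] at h
      exact hzb (hinj w (hsub hw) hz hb (sub_left_injective h)))
    (by
      rw [norm_div]
      gcongr
      exact (norm_sub_le _ _).trans (add_le_add (hC0 z hz hzR) (hCa c hcc)))
    μ hμ
  have hC1n : 0 ≤ C1 := (norm_nonneg _).trans key
  have hμne := hne μ (hs2 hμ)
  have e : φ μ z = (φ μ z - φ μ a) / (φ μ b - φ μ a) * (φ μ b - φ μ a) + φ μ a := by
    rw [div_mul_cancel₀ _ hμne]; ring
  rw [e]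
  refine (norm_add_le _ _).trans (add_le_add ?_ (hCa μ hμ))
  rw [norm_mul]
  gcongr
  exact (norm_sub_le _ _).trans (add_le_add (hCb μ hμ) (hCa μ hμ))

lemma hm_bdd {Λ : Set ℂ} (hΛo : IsOpen Λ) (hΛc : IsConnected Λ)
    {l₀ : ℂ} (hl₀ : l₀ ∈ Λ) {X : Set ℂ} {φ : ℂ → ℂ → ℂ}
    (hφ : IsHolomorphicMotion Λ l₀ X φ) {a b : ℂ} (ha : a ∈ X) (hb : b ∈ X) (hab : a ≠ b)
    {l : ℂ} (hl : l ∈ Λ) (R : ℝ) : ∃ C : ℝ, ∀ z ∈ X, ‖z‖ ≤ R → ‖φ l z‖ ≤ C := by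
  have main := hΛc.isPreconnected.induction₂'
    (P := fun x y => (∀ R : ℝ, ∃ C : ℝ, ∀ z ∈ X, ‖z‖ ≤ R → ‖φ x z‖ ≤ C) →
      (∀ R : ℝ, ∃ C : ℝ, ∀ z ∈ X, ‖z‖ ≤ R → ‖φ y z‖ ≤ C)) ?_
      (fun x y z _ _ _ h1 h2 h => h2 (h1 h)) hl₀ hl
  · refine main (fun R => ⟨R, fun z hz hzR => ?_⟩) R
    rw [hφ.2.2 z hz]; exact hzR
  · intro x hx
    obtain ⟨r, hr, hrs⟩ := Metric.isOpen_iff.1 hΛo x hx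
    apply mem_nhdsWithin_of_mem_nhds
    filter_upwards [ball_mem_nhds x (by positivity : 0 < r / 4)] with y hy
    have hyx : dist y x < r / 4 := hy
    constructor
    · intro h R
      obtain ⟨C, hC⟩ := hm_local hφ ha hb hab hr hrs h R
      exact ⟨C, fun z hz hzR => hC z hz hzR y (by rw [mem_closedBall]; linarith)⟩
    · intro h R
      obtain ⟨C, hC⟩ := hm_local hφ ha hb hab (by positivity : 0 < r / 2)
        (fun w hw => hrs (by
          have h1 : dist w y < r / 2 := hw
          have := dist_triangle w y x
          rw [mem_ball]; linarith)) h R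
      exact ⟨C, fun z hz hzR => hC z hz hzR x (by
        rw [mem_closedBall, dist_comm]; linarith)⟩

lemma hm_modulus {Λ : Set ℂ} (hΛo : IsOpen Λ) (hΛc : IsConnected Λ)
    {l₀ : ℂ} (hl₀ : l₀ ∈ Λ) {X : Set ℂ} {φ : ℂ → ℂ → ℂ}
    (hφ : IsHolomorphicMotion Λ l₀ X φ) {a b : ℂ} (ha : a ∈ X) (hb : b ∈ X) (hab : a ≠ b)
    {c : ℂ} (hc : c ∈ Λ) : ∃ r > 0, ball c r ⊆ Λ ∧ ∀ R : ℝ, ∀ ε > 0, ∃ δ > 0,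
      ∀ z ∈ X, ∀ w ∈ X, ‖z‖ ≤ R → ‖w‖ ≤ R → ∀ μ ∈ ball c r,
        (‖φ c z - φ c w‖ < δ → ‖φ μ z - φ μ w‖ < ε) ∧
        (‖φ μ z - φ μ w‖ < δ → ‖φ c z - φ c w‖ < ε) := by
  obtain ⟨r, hr, hrs⟩ := Metric.isOpen_iff.1 hΛo c hc
  refine ⟨r / 2 / 4, by positivity, (ball_subset_ball (by linarith)).trans hrs, ?_⟩
  intro R ε hε
  obtain ⟨C, hC⟩ := hm_local hφ ha hb hab hr hrs
    (fun R => hm_bdd hΛo hΛc hl₀ hφ ha hb hab hc R) R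
  let M : ℝ := |C| + |C| + 1
  have hM : 0 < M := by positivity
  refine ⟨ε ^ 3 / M ^ 2, by positivity, ?_⟩
  intro z hz w hw hzR hwR μ hμ
  by_cases hzw : z = w
  · subst hzw; simp [hε]
  have hs : ball c (r / 2) ⊆ Λ := (ball_subset_ball (by linarith)).trans hrs
  obtain ⟨k1, k2⟩ := hm_harnack (h := fun μ => φ μ z - φ μ w) (c := c) (r := r / 2) (M := M)
    (by positivity) (((hφ.1 z hz).mono hs).sub ((hφ.1 w hw).mono hs))
    (fun y hy h => hzw (hφ.2.1 y (hs hy) hz hw (sub_eq_zero.1 h)))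
    (fun y hy => by
      have h1 := hC z hz hzR y (ball_subset_closedBall hy)
      have h2 := hC w hw hwR y (ball_subset_closedBall hy)
      have := norm_sub_le (φ y z) (φ y w)
      have := le_abs_self C
      simp only [M]; linarith) hμ
  constructor
  · intro h
    rw [lt_div_iff₀ (by positivity)] at h
    exact lt_of_pow_lt_pow_left₀ 3 hε.le (by linarith)
  · intro h
    rw [lt_div_iff₀ (by positivity)] at h
    exact lt_of_pow_lt_pow_left₀ 3 hε.le (by linarith)

lemma hm_unif {Λ : Set ℂ} (hΛo : IsOpen Λ) (hΛc : IsConnected Λ)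
    {l₀ : ℂ} (hl₀ : l₀ ∈ Λ) {X : Set ℂ} {φ : ℂ → ℂ → ℂ}
    (hφ : IsHolomorphicMotion Λ l₀ X φ) {a b : ℂ} (ha : a ∈ X) (hb : b ∈ X) (hab : a ≠ b)
    {l m : ℂ} (hl : l ∈ Λ) (hm : m ∈ Λ) : ∀ R : ℝ, ∀ ε > 0, ∃ δ > 0,
      ∀ z ∈ X, ∀ w ∈ X, ‖z‖ ≤ R → ‖w‖ ≤ R →
        ‖φ l z - φ l w‖ < δ → ‖φ m z - φ m w‖ < ε := by
  refine hΛc.isPreconnected.induction₂' (P := fun l m => ∀ R : ℝ, ∀ ε > 0, ∃ δ > 0,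
      ∀ z ∈ X, ∀ w ∈ X, ‖z‖ ≤ R → ‖w‖ ≤ R →
        ‖φ l z - φ l w‖ < δ → ‖φ m z - φ m w‖ < ε) ?_ ?_ hl hm
  · intro c hc
    obtain ⟨r, hr, -, h⟩ := hm_modulus hΛo hΛc hl₀ hφ ha hb hab hc
    apply mem_nhdsWithin_of_mem_nhds
    filter_upwards [ball_mem_nhds c hr] with y hy
    constructor
    · intro R ε hε
      obtain ⟨δ, hδ, h'⟩ := h R ε hε
      exact ⟨δ, hδ, fun z hz w hw hzR hwR => (h' z hz w hw hzR hwR y hy).1⟩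
    · intro R ε hε
      obtain ⟨δ, hδ, h'⟩ := h R ε hε
      exact ⟨δ, hδ, fun z hz w hw hzR hwR => (h' z hz w hw hzR hwR y hy).2⟩
  · intro x y t _ _ _ h1 h2 R ε hε
    obtain ⟨δ, hδ, h2'⟩ := h2 R ε hε
    obtain ⟨δ', hδ', h1'⟩ := h1 R δ hδ
    exact ⟨δ', hδ', fun z hz w hw hzR hwR h =>
      h2' z hz w hw hzR hwR (h1' z hz w hw hzR hwR h)⟩

open Filter Topology in
/-- λ-lemma (extension part): a holomorphic motion of `X` over a connected open set `Λ`
extends uniquely to a holomorphic motion of the closure of `X`, and for each parameter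
the extended map is continuous and injective on the closure of `X`. -/
theorem holomorphicMotion_extends_to_closure (Λ : Set ℂ) (hΛo : IsOpen Λ)
    (hΛc : IsConnected Λ) (l₀ : ℂ) (hl₀ : l₀ ∈ Λ) (X : Set ℂ) (φ : ℂ → ℂ → ℂ)
    (hφ : IsHolomorphicMotion Λ l₀ X φ) :
    ∃ ψ : ℂ → ℂ → ℂ,
      ((∀ l ∈ Λ, ∀ z ∈ X, ψ l z = φ l z) ∧
        IsHolomorphicMotion Λ l₀ (closure X) ψ ∧
        ∀ l ∈ Λ, ContinuousOn (ψ l) (closure X) ∧ Set.InjOn (ψ l) (closure X)) ∧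
      ∀ ψ' : ℂ → ℂ → ℂ,
        ((∀ l ∈ Λ, ∀ z ∈ X, ψ' l z = φ l z) ∧
          IsHolomorphicMotion Λ l₀ (closure X) ψ' ∧
          ∀ l ∈ Λ, ContinuousOn (ψ' l) (closure X) ∧ Set.InjOn (ψ' l) (closure X)) →
        ∀ l ∈ Λ, ∀ z ∈ closure X, ψ' l z = ψ l z := by
  by_cases hX : X.Subsingleton
  · have hcl : closure X = X := hX.finite.isClosed.closure_eq
    rw [hcl]
    exact ⟨φ, ⟨fun _ _ _ _ => rfl, hφ, fun l hl => ⟨hX.continuousOn _, hφ.2.1 l hl⟩⟩,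
      fun ψ' h l hl z hz => h.1 l hl z hz⟩
  obtain ⟨a, ha, b, hb, hab⟩ := Set.not_subsingleton_iff.1 hX
  have hne : ∀ z ∈ closure X, (𝓝[X] z).NeBot := fun z hz =>
    mem_closure_iff_nhdsWithin_neBot.1 hz
  have hbd : ∀ z : ℂ, ∀ᶠ w in 𝓝[X] z, w ∈ X ∧ ‖w‖ ≤ ‖z‖ + 1 := by
    intro z
    filter_upwards [self_mem_nhdsWithin, mem_nhdsWithin_of_mem_nhds (ball_mem_nhds z one_pos)]
      with w hw hw2
    have h1 : ‖w - z‖ < 1 := by simpa [dist_eq_norm] using hw2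
    have := norm_sub_norm_le w z
    exact ⟨hw, by linarith⟩
  have hlim : ∀ l ∈ Λ, ∀ z ∈ closure X, ∃ y, Tendsto (φ l) (𝓝[X] z) (𝓝 y) := by
    intro l hl z hz
    have := hne z hz
    apply CompleteSpace.complete
    rw [Metric.cauchy_iff]
    refine ⟨inferInstance, fun ε hε => ?_⟩
    obtain ⟨δ, hδ, h⟩ := hm_unif hΛo hΛc hl₀ hφ ha hb hab hl₀ hl (‖z‖ + 1) ε hε
    refine ⟨φ l '' {w | (w ∈ X ∧ ‖w‖ ≤ ‖z‖ + 1) ∧ w ∈ ball z (δ / 2)}, image_mem_map ?_, ?_⟩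
    · exact (hbd z).and (mem_nhdsWithin_of_mem_nhds (ball_mem_nhds z (by positivity)))
    · rintro _ ⟨w, ⟨⟨hw, hwR⟩, hw2⟩, rfl⟩ _ ⟨v, ⟨⟨hv, hvR⟩, hv2⟩, rfl⟩
      rw [dist_eq_norm]
      apply h w hw v hv hwR hvR
      rw [hφ.2.2 w hw, hφ.2.2 v hv, ← dist_eq_norm]
      have := dist_triangle_right w v z
      have h1 : dist w z < δ / 2 := hw2
      have h2 : dist v z < δ / 2 := hv2
      linarith
  let ψ : ℂ → ℂ → ℂ := fun l => extendFrom X (φ l)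
  have hψ : ∀ l ∈ Λ, ∀ z ∈ closure X, Tendsto (φ l) (𝓝[X] z) (𝓝 (ψ l z)) :=
    fun l hl z hz => tendsto_extendFrom (hlim l hl z hz)
  have hcont : ∀ l ∈ Λ, ContinuousOn (ψ l) (closure X) := fun l hl =>
    continuousOn_extendFrom subset_rfl (hlim l hl)
  have hext : ∀ l ∈ Λ, ∀ z ∈ X, ψ l z = φ l z := by
    intro l hl z hz
    have h1 := hψ l hl z (subset_closure hz)
    have h2 : Tendsto (φ l) (pure z) (𝓝 (ψ l z)) := h1.mono_left (pure_le_nhdsWithin hz)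
    exact (tendsto_nhds_unique h2 (tendsto_pure_nhds _ _))
  have hinj : ∀ l ∈ Λ, InjOn (ψ l) (closure X) := by
    intro l hl z hz w hw hzw
    have := hne z hz
    have := hne w hw
    by_contra hzw'
    have hd : 0 < ‖z - w‖ := norm_pos_iff.2 (sub_ne_zero.2 hzw')
    obtain ⟨δ, hδ, h⟩ := hm_unif hΛo hΛc hl₀ hφ ha hb hab hl hl₀ (max (‖z‖ + 1) (‖w‖ + 1))
      (‖z - w‖ / 2) (by positivity)
    have t1 : Tendsto (fun p : ℂ × ℂ => ‖φ l p.1 - φ l p.2‖) (𝓝[X] z ×ˢ 𝓝[X] w) (𝓝 0) := by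
      have := (((hψ l hl z hz).comp tendsto_fst).sub ((hψ l hl w hw).comp
        (tendsto_snd (f := 𝓝[X] z)))).norm
      rw [hzw, sub_self, norm_zero] at this
      exact this
    have t2 : Tendsto (fun p : ℂ × ℂ => ‖p.1 - p.2‖) (𝓝[X] z ×ˢ 𝓝[X] w) (𝓝 ‖z - w‖) := by
      have i1 : Tendsto (fun x : ℂ => x) (𝓝[X] z) (𝓝 z) := nhdsWithin_le_nhds
      have i2 : Tendsto (fun x : ℂ => x) (𝓝[X] w) (𝓝 w) := nhdsWithin_le_nhds
      exact ((i1.comp tendsto_fst).sub (i2.comp tendsto_snd)).norm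
    obtain ⟨p, ⟨⟨hp1, hp2⟩, hp3⟩, hp4⟩ := (((((hbd z).prod_mk (hbd w))).and
      (t1.eventually_lt_const hδ)).and
      (t2.eventually_const_lt (by linarith : ‖z - w‖ / 2 < ‖z - w‖))).exists
    have := h p.1 hp1.1 p.2 hp2.1 (hp1.2.trans (le_max_left _ _))
      (hp2.2.trans (le_max_right _ _)) hp3
    rw [hφ.2.2 _ hp1.1, hφ.2.2 _ hp2.1] at this
    linarith
  have hhol : ∀ z ∈ closure X, DifferentiableOn ℂ (fun l => ψ l z) Λ := by
    intro z hz c hc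
    have := hne z hz
    obtain ⟨r, hr, hrs, h⟩ := hm_modulus hΛo hΛc hl₀ hφ ha hb hab hc
    have hu : TendstoUniformlyOn (fun w l => φ l w) (fun l => ψ l z) (𝓝[X] z) (ball c r) := by
      rw [Metric.tendstoUniformlyOn_iff]
      intro ε hε
      obtain ⟨δ, hδ, h'⟩ := h (‖z‖ + 1) (ε / 2) (by positivity)
      have hn : ∀ᶠ w in 𝓝[X] z, dist (φ c w) (ψ c z) < δ / 2 :=
        (hψ c hc z hz).eventually (ball_mem_nhds _ (by positivity))
      filter_upwards [hbd z, hn] with w hw hw2 μ hμ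
      have hle : dist (ψ μ z) (φ μ w) ≤ ε / 2 := by
        refine le_of_tendsto ((hψ μ (hrs hμ) z hz).dist tendsto_const_nhds) ?_
        filter_upwards [hbd z, hn] with v hv hv2
        rw [dist_eq_norm]
        refine ((h' v hv.1 w hw.1 hv.2 hw.2 μ hμ).1 ?_).le
        rw [← dist_eq_norm]
        have := dist_triangle_right (φ c v) (φ c w) (ψ c z)
        linarith
      linarith
    have hdiff := hu.tendstoLocallyUniformlyOn.differentiableOn
      ((hbd z).mono fun w hw => (hφ.1 w hw.1).mono hrs) isOpen_ball
    exact ((hdiff c (mem_ball_self hr)).differentiableAt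
      (ball_mem_nhds c hr)).differentiableWithinAt
  refine ⟨ψ, ⟨hext, ⟨hhol, hinj, ?_⟩, fun l hl => ⟨hcont l hl, hinj l hl⟩⟩, ?_⟩
  · intro z hz
    have := hne z hz
    refine tendsto_nhds_unique (hψ l₀ hl₀ z hz) ?_
    have i1 : Tendsto (fun x : ℂ => x) (𝓝[X] z) (𝓝 z) := nhdsWithin_le_nhds
    refine i1.congr' ?_
    filter_upwards [self_mem_nhdsWithin] with w hw
    exact (hφ.2.2 w hw).symm
  · intro ψ' h l hl z hz
    have := hne z hz
    refine tendsto_nhds_unique ?_ (hψ l hl z hz)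
    refine (((h.2.2 l hl).1 z hz).mono_left (nhdsWithin_mono z subset_closure)).congr' ?_
    filter_upwards [self_mem_nhdsWithin] with w hw
    exact h.1 l hl w hw
end

section
/- Let X ⊂ ℂ be a compact, connected, full set with more than one point, and let φ : ℂ \ 𝔻̄ → ℂ \ X be a conformal isomorphism. Then φ extends continuously to the closed complement of the open unit disk if and only if the boundary of X is locally connected. -/
open Set Filter Topology MeasureTheory Metric


lemma ct_exp_eq {S : Set ℂ} (hS : IsPreconnected S) {f g : ℂ → ℂ} (hf : ContinuousOn f S)
    (hg : ContinuousOn g S) (h : ∀ z ∈ S, Complex.exp (f z) = Complex.exp (g z)) :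
    ∃ c : ℂ, Complex.exp c = 1 ∧ ∀ z ∈ S, f z = g z + c := by
  rcases S.eq_empty_or_nonempty with rfl | ⟨a, ha⟩
  · exact ⟨0, by simp, by simp⟩
  have hc : Complex.exp (f a - g a) = 1 := by
    rw [Complex.exp_sub, h a ha, div_self (Complex.exp_ne_zero _)]
  refine ⟨f a - g a, hc, ?_⟩
  refine Complex.isCoveringMap_exp.eqOn_of_comp_eqOn hS hf (hg.add continuousOn_const) ?_ ha
    (by simp)
  intro z hz
  simp [Complex.exp_add, hc, h z hz]

lemma ct_no_ext (G : ℂ → ℂ) (hG : Continuous G) (h0 : ∀ z, G z ≠ 0) (p : ℂ) (R : ℝ)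
    (hR : ∀ z, R ≤ ‖z‖ → G z = z - p) : False := by
  obtain ⟨L, ⟨-, hLe⟩, -⟩ := Complex.isCoveringMapOn_exp.existsUnique_continuousMap_lifts
    ⟨G, hG⟩ (Complex.exp_log (h0 0)) h0
  have hL : Continuous L := L.continuous
  have hLe : ∀ z, Complex.exp (L z) = G z := fun z => congrFun hLe z
  set r : ℝ := max R (‖p‖ + 1) with hr
  have hr1 : ‖p‖ < r := by have := le_max_right R (‖p‖+1); linarith
  have hr0 : 0 < r := lt_of_le_of_lt (norm_nonneg _) hr1
  have hr0' : (r : ℂ) ≠ 0 := by exact_mod_cast hr0.ne'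
  let e : ℂ → ℂ := fun θ => Complex.exp (θ * Complex.I)
  let S : Set ℂ := (fun x : ℝ => (x : ℂ)) '' univ
  have hS : IsPreconnected S := isPreconnected_univ.image _ Complex.continuous_ofReal.continuousOn
  have hne : ∀ θ ∈ S, ‖e θ‖ = 1 := by
    rintro _ ⟨x, -, rfl⟩
    simp [e, Complex.norm_exp_ofReal_mul_I]
  have hsl : ∀ θ ∈ S, 1 - p / (r * e θ) ∈ Complex.slitPlane := by
    intro θ hθ
    rw [sub_eq_add_neg]
    apply Complex.mem_slitPlane_of_norm_lt_one
    rw [norm_neg, norm_div, norm_mul, hne θ hθ]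
    simp only [Complex.norm_real, Real.norm_eq_abs, abs_of_pos hr0, mul_one]
    rw [div_lt_one hr0]; exact hr1
  obtain ⟨c, hc, hcs⟩ := ct_exp_eq hS
    (f := fun θ => L (r * e θ)) (g := fun θ => Real.log r + θ * Complex.I
      + Complex.log (1 - p / (r * e θ))) (by fun_prop)
    (by
      apply ContinuousOn.add (by fun_prop)
      apply ContinuousOn.clog _ hsl
      apply ContinuousOn.sub continuousOn_const
      apply ContinuousOn.div continuousOn_const (by fun_prop)
      intro θ _
      exact mul_ne_zero hr0' (Complex.exp_ne_zero _))
    (by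
      intro θ hθ
      have h1 : (e θ) ≠ 0 := Complex.exp_ne_zero _
      have h2 : 1 - p / (r * e θ) ≠ 0 := Complex.slitPlane_ne_zero (hsl θ hθ)
      rw [hLe, hR, Complex.exp_add, Complex.exp_add, Complex.exp_log h2,
        ← Complex.ofReal_exp, Real.exp_log hr0]
      · change _ = r * e θ * _
        field_simp
      · rw [norm_mul, hne θ hθ, mul_one, Complex.norm_real, Real.norm_eq_abs, abs_of_pos hr0]
        exact le_max_left _ _)
  have e1 := hcs ((0 : ℝ) : ℂ) ⟨0, mem_univ _, rfl⟩
  have e2 := hcs ((2 * Real.pi : ℝ) : ℂ) ⟨_, mem_univ _, rfl⟩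
  have e3 : e ((2 * Real.pi : ℝ) : ℂ) = e ((0 : ℝ) : ℂ) := by
    simp [e, Complex.exp_two_pi_mul_I]
  simp only [e3] at e2
  rw [e1] at e2
  have := congrArg Complex.im e2
  simp at this
  
/-- if the quotient has a log on `K`, then `K` can't bound a region `U` separating `p` from `q` -/
lemma ct_sep (K U : Set ℂ) (hK : IsClosed K) (hU : IsOpen U) (hUb : Bornology.IsBounded U)
    (hcl : closure U ⊆ U ∪ K) (hUK : Disjoint U K) (p q : ℂ) (hp : p ∈ U) (hqU : q ∉ U) (hqK : q ∉ K)
    (h : ℂ → ℂ) (hc : ContinuousOn h K) (he : ∀ z ∈ K, Complex.exp (h z) = (z - p) / (z - q)) :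
    False := by
  classical
  obtain ⟨H, hH⟩ := ContinuousMap.exists_restrict_eq hK ⟨K.domRestrict h, hc.domRestrict⟩
  have hH : ∀ z ∈ K, H z = h z := fun z hz => congrArg (fun f => f ⟨z, hz⟩) hH
  obtain ⟨R, hR⟩ := hUb.subset_ball 0
  have hpK : p ∉ K := fun h => hUK.le_bot ⟨hp, h⟩
  refine ct_no_ext (U.piecewise (fun z => (z - q) * Complex.exp (H z)) (fun z => z - p)) ?_ ?_ p R ?_
  · apply Continuous.piecewise
    · intro z hz
      have hzK : z ∈ K := by
        rw [hU.frontier_eq] at hz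
        exact (hcl hz.1).resolve_left hz.2
      have : z - q ≠ 0 := sub_ne_zero.2 (fun h => hqK (h ▸ hzK))
      rw [hH z hzK, he z hzK]
      field_simp
    · fun_prop
    · fun_prop
  · intro z
    by_cases hz : z ∈ U
    · rw [piecewise_eq_of_mem _ _ _ hz]
      exact mul_ne_zero (sub_ne_zero.2 (fun h => hqU (h ▸ hz))) (Complex.exp_ne_zero _)
    · rw [piecewise_eq_of_notMem _ _ _ hz]
      exact (sub_ne_zero.2 (fun h => hz (h ▸ hp)))
  · intro z hz
    rw [piecewise_eq_of_notMem]
    intro h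
    have := hR h
    simp at this
    linarith

/-- log on a ball -/
lemma ct_log_ball (a p : ℂ) (ε : ℝ) (hp : ε < ‖p - a‖) :
    ∃ h : ℂ → ℂ, ContinuousOn h (closedBall a ε) ∧
      ∀ z ∈ closedBall a ε, Complex.exp (h z) = z - p := by
  rcases lt_or_ge ε 0 with hε | hε
  · exact ⟨0, by simp [closedBall_eq_empty.2 hε], by simp [closedBall_eq_empty.2 hε]⟩
  have hap : a - p ≠ 0 := by
    rw [sub_ne_zero]; rintro rfl; simp at hp; linarith
  have hsl : ∀ z ∈ closedBall a ε, 1 + (z - a) / (a - p) ∈ Complex.slitPlane := by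
    intro z hz
    apply Complex.mem_slitPlane_of_norm_lt_one
    rw [norm_div, div_lt_one (norm_pos_iff.2 hap), norm_sub_rev a p]
    rw [mem_closedBall, dist_eq_norm] at hz
    linarith
  refine ⟨fun z => Complex.log (a - p) + Complex.log (1 + (z - a) / (a - p)), ?_, ?_⟩
  · apply ContinuousOn.add continuousOn_const
    exact ContinuousOn.clog (by fun_prop) hsl
  · intro z hz
    rw [Complex.exp_add, Complex.exp_log hap, Complex.exp_log (Complex.slitPlane_ne_zero (hsl z hz))]
    field_simp
    ring

/-- log on a compact with connected complement -/
lemma ct_log_full (X : Set ℂ) (hX : IsCompact X) (hc : IsPreconnected Xᶜ) (p q : ℂ)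
    (hp : p ∉ X) (hq : q ∉ X) :
    ∃ h : ℂ → ℂ, ContinuousOn h X ∧ ∀ z ∈ X, Complex.exp (h z) = (z - p) / (z - q) := by
  let P : ℂ → ℂ → Prop := fun p q => 
    ∃ h : ℂ → ℂ, ContinuousOn h X ∧ ∀ z ∈ X, Complex.exp (h z) = (z - p) / (z - q)
  have hsub : ∀ {p z}, p ∉ X → z ∈ X → z - p ≠ 0 := by
    intro p z hp hz; rw [sub_ne_zero]; rintro rfl; exact hp hz
  refine hc.induction₂ P ?_ ?_ ?_ hp hq
  · intro x hx
    obtain ⟨ε, hε, hb⟩ := Metric.isOpen_iff.1 hX.isClosed.isOpen_compl x hx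
    filter_upwards [self_mem_nhdsWithin, mem_nhdsWithin_of_mem_nhds (ball_mem_nhds x hε)] with y hy hyb
    have hlt : ∀ z ∈ X, ‖y - x‖ < ‖z - x‖ := by
      intro z hz
      have h1 : z ∉ ball x ε := fun h => hb h hz
      rw [mem_ball, dist_eq_norm] at h1 hyb
      linarith
    refine ⟨fun z => - Complex.log (1 + (x - y) / (z - x)), ?_, ?_⟩
    · apply ContinuousOn.neg
      apply ContinuousOn.clog
      · apply ContinuousOn.add continuousOn_const
        exact ContinuousOn.div (by fun_prop) (by fun_prop) fun z hz => hsub hx hz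
      · intro z hz
        apply Complex.mem_slitPlane_of_norm_lt_one
        rw [norm_div, div_lt_one (norm_pos_iff.2 (hsub hx hz)), norm_sub_rev]
        exact hlt z hz
    · intro z hz
      have h1 := hsub hx hz
      have h2 := hsub hy hz
      have : 1 + (x - y) / (z - x) = (z - y) / (z - x) := by field_simp; ring
      simp only [this]
      rw [Complex.exp_neg, Complex.exp_log (div_ne_zero h2 h1), inv_div]
  · rintro x y z hx hy hz ⟨f, hf, hfe⟩ ⟨g, hg, hge⟩
    refine ⟨fun z => f z + g z, hf.add hg, fun w hw => ?_⟩
    have h1 := hsub hy hw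
    rw [Complex.exp_add, hfe w hw, hge w hw]
    field_simp
  · rintro x y hx hy ⟨f, hf, hfe⟩
    refine ⟨fun z => - f z, hf.neg, fun w hw => ?_⟩
    rw [Complex.exp_neg, hfe w hw, inv_div]

/-- combined separation statement -/
lemma ct_janis (X : Set ℂ) (hX : IsCompact X) (hc : IsPreconnected Xᶜ) (a : ℂ) (ε : ℝ)
    (A B U : Set ℂ) (hA : IsClosed A) (hB : IsClosed B) (hBc : IsPreconnected B)
    (hAb : A ⊆ closedBall a ε) (hBb : B ⊆ closedBall a ε) (hBX : B ⊆ frontier X)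
    (hAX : A ∩ frontier X ⊆ B) (hU : IsOpen U) (hUb : Bornology.IsBounded U)
    (hUX : U ⊆ Xᶜ) (hUA : Disjoint U A) (hcl : closure U ⊆ U ∪ (A ∪ frontier X)) (p q : ℂ)
    (hp : p ∈ U) (hqX : q ∉ X) (hqU : q ∉ U) (hpa : ε < ‖p - a‖) (hqa : ε < ‖q - a‖) : False := by
  classical
  have hfX : frontier X ⊆ X := hX.isClosed.frontier_subset
  obtain ⟨f1, hf1, he1⟩ := ct_log_ball a p ε hpa
  obtain ⟨f2, hf2, he2⟩ := ct_log_ball a q ε hqa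
  obtain ⟨g, hg, hge⟩ := ct_log_full X hX hc p q (hUX hp) hqX
  have hfe : ∀ z ∈ closedBall a ε, Complex.exp (f1 z - f2 z) = (z - p) / (z - q) := by
    intro z hz; rw [Complex.exp_sub, he1 z hz, he2 z hz]
  obtain ⟨c, hc1, hcs⟩ := ct_exp_eq hBc (f := fun z => f1 z - f2 z) (g := g)
    ((hf1.sub hf2).mono hBb) (hg.mono (hBX.trans hfX))
    (fun z hz => (hfe z (hBb hz)).trans (hge z (hfX (hBX hz))).symm)
  let F := A ∪ B
  have hF : IsClosed F := hA.union hB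
  have hFb : F ⊆ closedBall a ε := union_subset hAb hBb
  have hFX : ∀ z ∈ F, z ∈ frontier X → z ∈ B := by
    rintro z (hz | hz) h
    · exact hAX ⟨hz, h⟩
    · exact hz
  let h : ℂ → ℂ := (frontier X).piecewise (fun z => g z + c) (fun z => f1 z - f2 z)
  have hh1 : ∀ z ∈ frontier X, h z = g z + c := fun z hz => piecewise_eq_of_mem _ _ _ hz
  have hh2 : ∀ z ∈ F, h z = f1 z - f2 z := by
    intro z hz
    by_cases hzX : z ∈ frontier X
    · rw [hh1 z hzX, hcs z (hFX z hz hzX)]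
    · exact piecewise_eq_of_notMem _ _ _ hzX
  refine ct_sep (F ∪ frontier X) U (hF.union isClosed_frontier) hU hUb ?_ ?_ p q hp hqU ?_ h ?_ ?_
  · refine hcl.trans (union_subset_union_right _ (union_subset_union_left _ subset_union_left))
  · rw [Set.disjoint_left]
    rintro z hz ((h | h) | h)
    · exact hUA.le_bot ⟨hz, h⟩
    · exact hUX hz (hfX (hBX h))
    · exact hUX hz (hfX h)
  · rintro (h | h)
    · have := hFb h
      rw [mem_closedBall, dist_eq_norm] at this; linarith
    · exact hqX (hfX h)
  · apply ContinuousOn.union_of_isClosed _ _ hF isClosed_frontier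
    · exact ((hf1.sub hf2).mono hFb).congr hh2
    · exact ((hg.mono hfX).add continuousOn_const).congr hh1
  · rintro z (hz | hz)
    · rw [hh2 z hz, hfe z (hFb hz)]
    · rw [hh1 z hz, Complex.exp_add, hc1, mul_one, hge z (hfX hz)]


lemma ct_open_at (f : ℂ → ℂ) (z : ℂ) (hf : AnalyticAt ℂ f z) (S : Set ℂ) (hS : S ∈ 𝓝[≠] z)
    (hi : InjOn f S) : 𝓝 (f z) ≤ map f (𝓝 z) := by
  refine hf.eventually_constant_or_nhds_le_map_nhds.resolve_left fun h => ?_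
  have h1 : ∀ᶠ w in 𝓝[≠] z, w ∈ S ∧ f w = f z := (eventually_mem_set.2 hS).and (h.filter_mono nhdsWithin_le_nhds)
  obtain ⟨w1, hw1, hne⟩ := (h1.and self_mem_nhdsWithin).exists
  have h2 : ∀ᶠ w in 𝓝[≠] z, w ≠ w1 :=
    (eventually_ne_nhds (Ne.symm hne)).filter_mono nhdsWithin_le_nhds
  obtain ⟨w2, hw2, hne2⟩ := (h1.and h2).exists
  exact hne2 (hi hw2.1 hw1.1 (hw2.2.trans hw1.2.symm))

lemma ct_isOpenE : IsOpen {z : ℂ | 1 < ‖z‖} := isOpen_lt continuous_const continuous_norm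

lemma ct_open_phi (φ : ℂ → ℂ) (hφd : DifferentiableOn ℂ φ {z : ℂ | 1 < ‖z‖})
    (hi : InjOn φ {z : ℂ | 1 < ‖z‖}) (z : ℂ) (hz : 1 < ‖z‖) : 𝓝 (φ z) ≤ map φ (𝓝 z) :=
  ct_open_at φ z (hφd.analyticAt (ct_isOpenE.mem_nhds hz)) _
    (mem_nhdsWithin_of_mem_nhds (ct_isOpenE.mem_nhds hz)) hi

lemma ct_infty (X : Set ℂ) (hXconn : IsConnected X) (hX1 : X.Nontrivial)
    (φ : ℂ → ℂ) (hφd : DifferentiableOn ℂ φ {z : ℂ | 1 < ‖z‖})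
    (hφb : Set.BijOn φ {z : ℂ | 1 < ‖z‖} Xᶜ) :
    (∀ C : ℝ, ∃ M : ℝ, ∀ z, M < ‖z‖ → C < ‖φ z‖) ∧
    (∀ M : ℝ, ∃ C : ℝ, ∀ z, 1 < ‖z‖ → ‖z‖ ≤ M → ‖φ z‖ ≤ C) := by
  have hop := ct_open_phi φ hφd hφb.injOn
  have hE2 : 1 < ‖(2 : ℂ)‖ := by norm_num
  set w0 := φ 2 with hw0
  have h1 : φ '' (ball 2 (1/2)) ∈ 𝓝 w0 := hop 2 hE2 (image_mem_map (ball_mem_nhds _ (by norm_num)))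
  obtain ⟨δ, hδ, hb⟩ := Metric.mem_nhds_iff.1 h1
  have hinv : ∀ v : ℂ, v ≠ 0 → v ∈ ball (0:ℂ) (1/3) → 3 < ‖v⁻¹‖ := by
    intro v hv hvb
    rw [mem_ball_zero_iff] at hvb
    rw [norm_inv, lt_inv_comm₀ (by norm_num) (norm_pos_iff.2 hv)]
    linarith
  have hfar : ∀ z : ℂ, 3 < ‖z‖ → δ ≤ ‖φ z - w0‖ := by
    intro z hz
    by_contra! hlt
    obtain ⟨y, hy, hyz⟩ := hb (show φ z ∈ ball w0 δ by rwa [mem_ball, dist_eq_norm])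
    rw [mem_ball, dist_eq_norm] at hy
    have t1 : ‖y‖ ≤ ‖y - 2‖ + ‖(2:ℂ)‖ := by simpa using norm_add_le (y - 2) 2
    have t2 : ‖(2:ℂ)‖ ≤ ‖(2:ℂ) - y‖ + ‖y‖ := by simpa using norm_add_le (2 - y) y
    rw [norm_sub_rev] at t2
    have t3 : ‖(2:ℂ)‖ = 2 := by norm_num
    have : y = z := hφb.injOn (show 1 < ‖y‖ by linarith) (show 1 < ‖z‖ by linarith) hyz
    subst this
    linarith
  set h : ℂ → ℂ := fun v => (φ v⁻¹ - w0)⁻¹ with hh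
  set s : Set ℂ := ball 0 (1/3) with hs
  have hsn : s ∈ 𝓝 (0:ℂ) := ball_mem_nhds _ (by norm_num)
  have hne : ∀ v ∈ s \ {0}, φ v⁻¹ - w0 ≠ 0 := by
    intro v hv h0
    have := hfar _ (hinv v hv.2 hv.1)
    rw [h0, norm_zero] at this
    linarith
  have hdiff : DifferentiableOn ℂ h (s \ {0}) := by
    apply DifferentiableOn.inv _ hne
    apply DifferentiableOn.sub_const
    apply hφd.comp (differentiableOn_id.inv fun v hv => hv.2)
    intro v hv
    have := hinv v hv.2 hv.1
    show 1 < ‖v⁻¹‖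
    linarith
  have hbd : BddAbove (norm ∘ h '' (s \ {0})) := by
    refine ⟨δ⁻¹, ?_⟩
    rintro _ ⟨v, hv, rfl⟩
    simp only [hh, Function.comp, norm_inv]
    exact inv_anti₀ hδ (hfar _ (hinv v hv.2 hv.1))
  have hd := Complex.differentiableOn_update_limUnder_of_bddAbove hsn hdiff hbd
  set c := limUnder (𝓝[≠] (0:ℂ)) h with hc
  set g := Function.update h 0 c with hg
  have hgv : ∀ v, v ≠ 0 → g v = (φ v⁻¹ - w0)⁻¹ := fun v hv => Function.update_of_ne hv _ _
  have hg0 : g 0 = c := Function.update_self _ _ _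
  have hgc : ContinuousAt g 0 := (hd.differentiableAt hsn).continuousAt
  have hgi : InjOn g (s \ {0}) := by
    intro x hx y hy hxy
    rw [hgv x hx.2, hgv y hy.2, inv_inj, sub_left_inj] at hxy
    have a1 := hinv x hx.2 hx.1
    have a2 := hinv y hy.2 hy.1
    exact inv_inj.1 (hφb.injOn (show 1 < ‖x⁻¹‖ by linarith) (show 1 < ‖y⁻¹‖ by linarith) hxy)
  have hgo : 𝓝 c ≤ map g (𝓝 0) := by
    have := ct_open_at g 0 (hd.analyticAt hsn) (s \ {0}) (sdiff_mem_nhdsWithin_compl hsn _) hgi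
    rwa [hg0] at this
  by_cases hc0 : c = 0
  · constructor
    · intro C
      -- near 0, ‖g v‖ < 1 / (|C| + ‖w0‖ + 1)
      set D := |C| + ‖w0‖ + 1 with hD
      have hDpos : 0 < D := by positivity
      have : ∀ᶠ v in 𝓝 (0:ℂ), ‖g v‖ < D⁻¹ := by
        have := hgc.norm.eventually_lt (tendsto_const_nhds (x := D⁻¹)) (by simp [hg0, hc0, hDpos])
        exact this
      obtain ⟨η, hη, hηb⟩ := Metric.eventually_nhds_iff_ball.1 this
      refine ⟨max 3 η⁻¹, fun z hz => ?_⟩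
      have hz3 : 3 < ‖z‖ := (le_max_left _ _).trans_lt hz
      have hzη : η⁻¹ < ‖z‖ := (le_max_right _ _).trans_lt hz
      have hz0 : z ≠ 0 := by rintro rfl; simp at hz3; linarith
      have h2 := hηb z⁻¹ (by
        rw [mem_ball_zero_iff, norm_inv]; exact inv_lt_of_inv_lt₀ hη hzη)
      rw [hgv _ (inv_ne_zero hz0), inv_inv, norm_inv] at h2
      have h3 : 0 < ‖φ z - w0‖ := hδ.trans_le (hfar z hz3)
      have h4 := (inv_lt_inv₀ h3 hDpos).1 h2
      have h5 := norm_sub_le (φ z) w0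
      have h6 := le_abs_self C
      linarith
    · intro M
      set M' := max M 3
      have hM' : 0 < M' := lt_of_lt_of_le (by norm_num) (le_max_right M 3)
      have : g '' (ball 0 (M'⁻¹)) ∈ 𝓝 (0:ℂ) := by
        rw [hc0] at hgo
        exact hgo (image_mem_map (ball_mem_nhds _ (by positivity)))
      obtain ⟨η, hη, hηb⟩ := Metric.mem_nhds_iff.1 this
      refine ⟨‖w0‖ + η⁻¹, fun z hz hzM => ?_⟩
      by_contra! hlt
      have h5 := norm_sub_norm_le (φ z) w0
      have h6 : η⁻¹ < ‖φ z - w0‖ := by linarith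
      have h60 : 0 < ‖φ z - w0‖ := lt_trans (by positivity) h6
      obtain ⟨v, hv, hvz⟩ := hηb (show (φ z - w0)⁻¹ ∈ ball 0 η by
        rw [mem_ball_zero_iff, norm_inv]; exact inv_lt_of_inv_lt₀ hη h6)
      have hv0 : v ≠ 0 := by
        rintro rfl
        rw [hg0, hc0] at hvz
        exact (inv_ne_zero (norm_pos_iff.1 h60)) hvz.symm
      rw [hgv v hv0, inv_inj, sub_left_inj] at hvz
      rw [mem_ball_zero_iff] at hv
      have h7 : M' < ‖v⁻¹‖ := by
        rw [norm_inv]; exact (lt_inv_comm₀ hM' (norm_pos_iff.2 hv0)).2 hv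
      have h8 : 3 ≤ M' := le_max_right _ _
      have h9 : M ≤ M' := le_max_left _ _
      have := hφb.injOn (show 1 < ‖v⁻¹‖ by linarith) hz hvz
      rw [this] at h7
      linarith
  · exfalso
    set a := w0 + c⁻¹ with ha
    have haw : a - w0 = c⁻¹ := by simp [ha]
    by_cases haX : a ∈ X
    · have hacc := (hXconn.isPreconnected.preperfect_of_nontrivial hX1) a haX
      rw [accPt_iff_frequently] at hacc
      apply hacc
      have hct : Tendsto (fun w => (w - w0)⁻¹) (𝓝 a) (𝓝 c) := by
        have : ContinuousAt (fun w => (w - w0)⁻¹) a :=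
          ContinuousAt.inv₀ (by fun_prop) (by rw [haw]; exact inv_ne_zero hc0)
        have h2 := this.tendsto
        simpa only [haw, inv_inv] using h2
      have hN : g '' s ∈ 𝓝 c := hgo (image_mem_map hsn)
      filter_upwards [hct hN] with w hw hwX
      obtain ⟨v, hv, hvw⟩ := hw
      by_cases hv0 : v = 0
      · rw [hv0, hg0] at hvw
        apply hwX.1
        rw [ha, hvw]; simp
      · rw [hgv v hv0, inv_inj, sub_left_inj] at hvw
        have a1 := hinv v hv0 hv
        exact hφb.mapsTo (show 1 < ‖v⁻¹‖ by linarith) (hvw ▸ hwX.2)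
    · obtain ⟨z', hz', hz'a⟩ := hφb.surjOn haX
      set M := max 3 (‖z'‖ + 1)
      have hM3 : 3 ≤ M := le_max_left _ _
      have hMz : ‖z'‖ + 1 ≤ M := le_max_right _ _
      have hN : φ '' ({z | 1 < ‖z‖} ∩ {z | ‖z‖ < M}) ∈ 𝓝 a := by
        rw [← hz'a]
        apply hop z' hz' (image_mem_map _)
        apply inter_mem (ct_isOpenE.mem_nhds hz')
        exact (isOpen_lt continuous_norm continuous_const).mem_nhds (by
          show ‖z'‖ < M; linarith)
      have hlim : Tendsto (fun v => w0 + (g v)⁻¹) (𝓝 0) (𝓝 a) := by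
        have h3 : Tendsto g (𝓝 0) (𝓝 c) := by rw [← hg0]; exact hgc
        exact (h3.inv₀ hc0).const_add _
      have hev : ∀ᶠ v in 𝓝[≠] (0:ℂ), w0 + (g v)⁻¹ ∈ φ '' ({z | 1 < ‖z‖} ∩ {z | ‖z‖ < M}) :=
        (hlim.eventually_mem hN).filter_mono nhdsWithin_le_nhds
      have hbM : ∀ᶠ v in 𝓝[≠] (0:ℂ), v ∈ ball (0:ℂ) M⁻¹ :=
        mem_nhdsWithin_of_mem_nhds (ball_mem_nhds _ (by positivity))
      obtain ⟨v, ⟨⟨z, ⟨hz1, hzM⟩, hzv⟩, hvM⟩, hv0⟩ :=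
        ((hev.and hbM).and self_mem_nhdsWithin).exists
      have hv0 : v ≠ 0 := hv0
      rw [hgv v hv0, inv_inv, add_sub_cancel] at hzv
      rw [mem_ball_zero_iff] at hvM
      have h7 : M < ‖v⁻¹‖ := by
        rw [norm_inv]; exact (lt_inv_comm₀ (by linarith) (norm_pos_iff.2 hv0)).2 hvM
      have := hφb.injOn hz1 (show 1 < ‖v⁻¹‖ by linarith) hzv
      rw [← this] at h7
      exact lt_asymm h7 hzM

/-- limits at the circle are in the boundary -/
lemma ct_bd (X : Set ℂ) (hXc : IsCompact X) 
    (φ : ℂ → ℂ) (hφd : DifferentiableOn ℂ φ {z : ℂ | 1 < ‖z‖})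
    (hφb : Set.BijOn φ {z : ℂ | 1 < ‖z‖} Xᶜ) (ζ : ℂ) (hζ : ‖ζ‖ = 1) (z : ℕ → ℂ)
    (hz : ∀ n, 1 < ‖z n‖) (hzζ : Tendsto z atTop (𝓝 ζ)) (w : ℂ)
    (hw : Tendsto (fun n => φ (z n)) atTop (𝓝 w)) : w ∈ frontier X := by
  rw [← frontier_compl, frontier_eq_closure_inter_closure, compl_compl, hXc.isClosed.closure_eq]
  refine ⟨mem_closure_of_tendsto hw (Eventually.of_forall fun n => hφb.mapsTo (hz n)), ?_⟩
  by_contra hwX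
  obtain ⟨z', hz', rfl⟩ := hφb.surjOn hwX
  have hop := ct_open_phi φ hφd hφb.injOn z' hz'
  obtain ⟨r, hr1, hr2⟩ := exists_between (show 1 < ‖z'‖ from hz')
  have hN : φ '' {y | r < ‖y‖} ∈ 𝓝 (φ z') :=
    hop (image_mem_map ((isOpen_lt continuous_const continuous_norm).mem_nhds hr2))
  have h1 := hw.eventually_mem hN
  have h2 := hzζ.norm.eventually_lt_const (show ‖ζ‖ < r by linarith)
  obtain ⟨n, ⟨y, hy, hyn⟩, hn⟩ := (h1.and h2).exists
  have hy : r < ‖y‖ := hy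
  have := hφb.injOn (show 1 < ‖y‖ by linarith) (hz n) hyn
  rw [this] at hy
  linarith

lemma ct_closure (X : Set ℂ) (hXc : IsCompact X) 
    (φ : ℂ → ℂ) (hφd : DifferentiableOn ℂ φ {z : ℂ | 1 < ‖z‖})
    (hφb : Set.BijOn φ {z : ℂ | 1 < ‖z‖} Xᶜ) (T : Set ℂ) (hT : IsClosed T) :
    closure (φ '' ({z : ℂ | 1 < ‖z‖} ∩ T)) ⊆ φ '' ({z : ℂ | 1 < ‖z‖} ∩ T) ∪ frontier X := by
  intro w hw
  by_cases hwX : w ∈ X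
  · right
    rw [← frontier_compl, frontier_eq_closure_inter_closure, compl_compl, hXc.isClosed.closure_eq]
    refine ⟨closure_mono ?_ hw, hwX⟩
    rintro _ ⟨z, hz, rfl⟩
    exact hφb.mapsTo hz.1
  · left
    obtain ⟨z', hz', rfl⟩ := hφb.surjOn hwX
    refine ⟨z', ⟨hz', ?_⟩, rfl⟩
    by_contra hzT
    have hN : φ '' ({z : ℂ | 1 < ‖z‖} ∩ Tᶜ) ∈ 𝓝 (φ z') :=
      ct_open_phi φ hφd hφb.injOn z' hz' (image_mem_map
        (inter_mem (ct_isOpenE.mem_nhds hz') (hT.isOpen_compl.mem_nhds hzT)))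
    obtain ⟨_, ⟨x, hx, rfl⟩, y, hy, hxy⟩ := mem_closure_iff_nhds.1 hw _ hN
    have := hφb.injOn hx.1 hy.1 hxy.symm
    subst this
    exact hx.2 hy.2

lemma ct_forward (X : Set ℂ) (hXc : IsCompact X)
    (hXconn : IsConnected X) (hX1 : X.Nontrivial)
    (φ : ℂ → ℂ) (hφd : DifferentiableOn ℂ φ {z : ℂ | 1 < ‖z‖})
    (hφb : Set.BijOn φ {z : ℂ | 1 < ‖z‖} Xᶜ) (Φ : ℂ → ℂ) (hΦ : ContinuousOn Φ {z : ℂ | 1 ≤ ‖z‖})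
    (hΦe : ∀ z : ℂ, 1 < ‖z‖ → Φ z = φ z) : LocallyConnectedSpace (frontier X) := by
  obtain ⟨hinf, -⟩ := ct_infty X hXconn hX1 φ hφd hφb
  have hmaps : ∀ u : Circle, Φ u ∈ frontier X := by
    intro u
    let z : ℕ → ℂ := fun n => ((1 + 1 / ((n : ℝ) + 1) : ℝ) : ℂ) * u
    have hzn : ∀ n, ‖z n‖ = 1 + 1 / ((n : ℝ) + 1) := by
      intro n
      rw [norm_mul, Circle.norm_coe, mul_one, Complex.norm_real, Real.norm_eq_abs, abs_of_pos (by positivity)]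
    have hz : ∀ n, 1 < ‖z n‖ := by
      intro n
      rw [hzn]
      have : 0 < 1 / ((n : ℝ) + 1) := by positivity
      linarith
    have hl : Tendsto z atTop (𝓝 (u : ℂ)) := by
      have h1 : Tendsto (fun n : ℕ => 1 + 1 / ((n : ℝ) + 1)) atTop (𝓝 (1 + 0)) :=
        tendsto_one_div_add_atTop_nhds_zero_nat.const_add 1
      have h2 := ((Complex.continuous_ofReal.tendsto _).comp h1).mul_const (u : ℂ)
      simpa [z, Function.comp_def] using h2
    refine ct_bd X hXc φ hφd hφb u (Circle.norm_coe u) z hz hl _ ?_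
    have h3 : Tendsto z atTop (𝓝[{z : ℂ | 1 ≤ ‖z‖}] (u:ℂ)) :=
      tendsto_nhdsWithin_iff.2 ⟨hl, Eventually.of_forall fun n => (hz n).le⟩
    have h4 := (hΦ u (Circle.norm_coe u).ge).tendsto.comp h3
    refine h4.congr fun n => ?_
    exact hΦe _ (hz n)
  let F : Circle → frontier X := fun u => ⟨Φ u, hmaps u⟩
  have hFc : Continuous F := by
    apply Continuous.subtype_mk
    exact hΦ.comp_continuous continuous_subtype_val (fun u => (Circle.norm_coe u).ge)
  have hFs : Function.Surjective F := by
    rintro ⟨p, hp⟩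
    have hpX : p ∈ X := hXc.isClosed.frontier_subset hp
    have hpc : p ∈ closure Xᶜ := by
      rw [← frontier_compl] at hp; exact frontier_subset_closure hp
    obtain ⟨w, hw, hwp⟩ := mem_closure_iff_seq_limit.1 hpc
    choose z hz hzw using fun n => hφb.surjOn (hw n)
    obtain ⟨M, hM⟩ := hinf (‖p‖ + 1)
    have hev : ∀ᶠ n in atTop, z n ∈ closedBall (0:ℂ) M := by
      filter_upwards [hwp.norm.eventually_lt_const (show ‖p‖ < ‖p‖ + 1 by linarith)] with n hn
      rw [mem_closedBall_zero_iff]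
      by_contra! hlt
      have := hM _ hlt
      rw [hzw] at this
      linarith
    obtain ⟨ζ, -, k, hk, hkl⟩ := (isCompact_closedBall (0:ℂ) M).tendsto_subseq' hev.frequently
    have hζ1 : 1 ≤ ‖ζ‖ := ge_of_tendsto' hkl.norm (fun n => (hz (k n)).le)
    have h3 : Tendsto (z ∘ k) atTop (𝓝[{z : ℂ | 1 ≤ ‖z‖}] ζ) :=
      tendsto_nhdsWithin_iff.2 ⟨hkl, Eventually.of_forall fun n => le_of_lt (show 1 < ‖z (k n)‖ from hz (k n))⟩
    have h4 := (hΦ ζ hζ1).tendsto.comp h3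
    have h5 : Tendsto (Φ ∘ (z ∘ k)) atTop (𝓝 p) := by
      refine (hwp.comp hk.tendsto_atTop).congr fun n => ?_
      simp only [Function.comp]
      rw [hΦe _ (hz (k n)), hzw]
    have h6 : Φ ζ = p := tendsto_nhds_unique h4 h5
    have h7 : ‖ζ‖ = 1 := by
      refine le_antisymm ?_ hζ1
      by_contra! hlt
      rw [hΦe _ hlt] at h6
      exact hφb.mapsTo hlt (h6 ▸ hpX)
    refine ⟨⟨ζ, by simpa [Submonoid.unitSphere] using h7⟩, ?_⟩
    exact Subtype.ext h6
  have hcl : IsClosedMap F := hFc.isClosedMap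
  have hq := hcl.isQuotientMap hFc hFs
  have : LocallyConnectedSpace Circle := by
    exact ChartedSpace.locallyConnectedSpace (EuclideanSpace ℝ (Fin 1)) Circle
  exact hq.isCoinducing.locallyConnectedSpace


/-- the half strip -/
def ctStrip : Set ℂ := {s : ℂ | s.re < -1 ∧ s.im ∈ Ioo (-(Real.pi / 2)) (Real.pi / 2)}

lemma ctStrip_open : IsOpen ctStrip := by
  apply IsOpen.inter
  · exact isOpen_lt Complex.continuous_re continuous_const
  · exact isOpen_Ioo.preimage Complex.continuous_im

lemma ct_energy (ψ : ℂ → ℂ) (hd : DifferentiableOn ℂ ψ ctStrip) (hi : InjOn ψ ctStrip)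
    (hb : Bornology.IsBounded (ψ '' ctStrip)) :
    ∫⁻ σ in Iio (-1 : ℝ), ∫⁻ τ in Ioo (-(Real.pi / 2)) (Real.pi / 2),
      ‖deriv ψ (⟨σ, τ⟩ : ℂ)‖ₑ ^ 2 < ⊤ := by
  have hms := ctStrip_open.measurableSet
  have h1 : ∫⁻ s in ctStrip, ‖deriv ψ s‖ₑ ^ 2 < ⊤ := by
    have h := lintegral_abs_det_fderiv_eq_addHaar_image volume hms
      (f := ψ) (f' := fun s => (ContinuousLinearMap.toSpanSingleton ℂ (deriv ψ s)).restrictScalars ℝ)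
      (fun x hx => (((hd.differentiableAt (ctStrip_open.mem_nhds hx)).hasDerivAt.hasFDerivAt).restrictScalars ℝ).hasFDerivWithinAt) hi
    refine lt_of_eq_of_lt ?_ (h ▸ hb.measure_lt_top)
    refine lintegral_congr fun s => ?_
    have : ((ContinuousLinearMap.toSpanSingleton ℂ (deriv ψ s)).restrictScalars ℝ).det = ‖deriv ψ s‖ ^ 2 := by
      simp [ContinuousLinearMap.det, LinearMap.det_restrictScalars,
        Algebra.norm_complex_eq, Complex.normSq_eq_norm_sq]
    rw [this, abs_of_nonneg (by positivity), ENNReal.ofReal_pow (norm_nonneg _), ofReal_norm]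
  have hm : Measurable fun s => ‖deriv ψ s‖ₑ ^ 2 := ((measurable_deriv ψ).enorm).pow_const 2
  have h2 := Complex.volume_preserving_equiv_real_prod.symm.setLIntegral_comp_preimage hms hm
  rw [← h2] at h1
  have h3 : (Complex.measurableEquivRealProd.symm ⁻¹' ctStrip) =
      Iio (-1 : ℝ) ×ˢ Ioo (-(Real.pi / 2)) (Real.pi / 2) := by
    ext ⟨x, y⟩
    simp [ctStrip, Complex.measurableEquivRealProd_symm_apply]
  rw [h3, Measure.volume_eq_prod, setLIntegral_prod] at h1
  · exact h1
  · exact (hm.comp Complex.measurableEquivRealProd.symm.measurable).aemeasurable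

lemma ct_small (ψ : ℂ → ℂ) (hd : DifferentiableOn ℂ ψ ctStrip) (hi : InjOn ψ ctStrip)
    (hb : Bornology.IsBounded (ψ '' ctStrip)) (N : ℝ) (κ : ENNReal) (hκ : κ ≠ 0) :
    ∃ σ : ℝ, σ < -1 ∧ σ < N ∧ ∫⁻ τ in Ioo (-(Real.pi / 2)) (Real.pi / 2),
      ‖deriv ψ (⟨σ, τ⟩ : ℂ)‖ₑ ^ 2 < κ := by
  by_contra! hcon
  have h := ct_energy ψ hd hi hb
  have h1 : ∫⁻ σ in Iio (min (-1) N), κ ≤ ∫⁻ σ in Iio (-1 : ℝ),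
      ∫⁻ τ in Ioo (-(Real.pi / 2)) (Real.pi / 2), ‖deriv ψ (⟨σ, τ⟩ : ℂ)‖ₑ ^ 2 := by
    calc _ ≤ ∫⁻ σ in Iio (min (-1) N), ∫⁻ τ in Ioo (-(Real.pi / 2)) (Real.pi / 2),
          ‖deriv ψ (⟨σ, τ⟩ : ℂ)‖ₑ ^ 2 := by
          apply setLIntegral_mono' measurableSet_Iio
          intro σ hσ
          rw [mem_Iio, lt_min_iff] at hσ
          exact hcon σ hσ.1 hσ.2
      _ ≤ _ := lintegral_mono_set (Iio_subset_Iio (min_le_left _ _))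
  rw [setLIntegral_const, Real.volume_Iio, ENNReal.mul_top hκ] at h1
  exact absurd h (not_lt.2 h1)

lemma ct_len (ψ : ℂ → ℂ) (hd : DifferentiableOn ℂ ψ ctStrip) (hi : InjOn ψ ctStrip)
    (hb : Bornology.IsBounded (ψ '' ctStrip)) (N : ℝ) (η : ℝ) (hη : 0 < η) :
    ∃ σ : ℝ, σ < -1 ∧ σ < N ∧ ∀ τ₁ ∈ Ioo (-(Real.pi / 2)) (Real.pi / 2),
      ∀ τ₂ ∈ Ioo (-(Real.pi / 2)) (Real.pi / 2), ‖ψ ⟨σ, τ₁⟩ - ψ ⟨σ, τ₂⟩‖ ≤ η := by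
  -- choose κ with κ (π + 1) ≤ η
  set k : ℝ := η / (Real.pi + 1) with hk
  have hk0 : 0 < k := by positivity
  set κ := ENNReal.ofReal k with hκ
  have hκ0 : κ ≠ 0 := by simpa [hκ] using hk0
  have hκt : κ ≠ ⊤ := ENNReal.ofReal_ne_top
  obtain ⟨σ, hσ1, hσN, hσ⟩ := ct_small ψ hd hi hb N (κ ^ 2) (pow_ne_zero 2 hκ0)
  refine ⟨σ, hσ1, hσN, ?_⟩
  have hder : ∀ τ ∈ Ioo (-(Real.pi / 2)) (Real.pi / 2),
      HasDerivAt (fun t : ℝ => ψ ⟨σ, t⟩) (deriv ψ ⟨σ, τ⟩ * Complex.I) τ := by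
    intro τ hτ
    have h1 : HasDerivAt ψ (deriv ψ ⟨σ, τ⟩) ⟨σ, τ⟩ :=
      (hd.differentiableAt (ctStrip_open.mem_nhds ⟨hσ1, hτ⟩)).hasDerivAt
    have h2 : HasDerivAt (fun t : ℝ => (⟨σ, t⟩ : ℂ)) Complex.I τ := by
      have : (fun t : ℝ => (⟨σ, t⟩ : ℂ)) = fun t : ℝ => (σ : ℂ) + (t : ℂ) * Complex.I := by
        funext t; apply Complex.ext <;> simp
      rw [this]
      simpa using ((Complex.ofRealCLM.hasDerivAt (x := τ)).mul_const Complex.I).const_add (σ : ℂ)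
    exact HasDerivAt.comp τ h1 h2
  have hcont : ContinuousOn (fun t : ℝ => deriv ψ ⟨σ, t⟩ * Complex.I) (Ioo (-(Real.pi / 2)) (Real.pi / 2)) := by
    apply ContinuousOn.mul _ continuousOn_const
    have h1 : ContinuousOn (deriv ψ) ctStrip := (hd.deriv ctStrip_open).continuousOn
    have h2 : Continuous (fun t : ℝ => (⟨σ, t⟩ : ℂ)) := by
      have : (fun t : ℝ => (⟨σ, t⟩ : ℂ)) = fun t : ℝ => (σ : ℂ) + (t : ℂ) * Complex.I := by
        funext t; apply Complex.ext <;> simp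
      rw [this]; fun_prop
    exact h1.comp h2.continuousOn fun t ht => ⟨hσ1, ht⟩
  have key : ∀ τ₁ ∈ Ioo (-(Real.pi / 2)) (Real.pi / 2),
      ∀ τ₂ ∈ Ioo (-(Real.pi / 2)) (Real.pi / 2), τ₁ ≤ τ₂ → ‖ψ ⟨σ, τ₂⟩ - ψ ⟨σ, τ₁⟩‖ ≤ η := by
    intro τ₁ h1 τ₂ h2 hle
    have hsub : Icc τ₁ τ₂ ⊆ Ioo (-(Real.pi / 2)) (Real.pi / 2) := Icc_subset_Ioo h1.1 h2.2
    have hftc := intervalIntegral.integral_eq_sub_of_hasDerivAt (a := τ₁) (b := τ₂)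
      (f := fun t : ℝ => ψ ⟨σ, t⟩) (f' := fun t => deriv ψ ⟨σ, t⟩ * Complex.I)
      (fun t ht => hder t (hsub (by rwa [uIcc_of_le hle] at ht)))
      (ContinuousOn.intervalIntegrable (hcont.mono (by rwa [uIcc_of_le hle])))
    rw [← ENNReal.ofReal_le_ofReal_iff hη.le, ofReal_norm, ← hftc,
      intervalIntegral.integral_of_le hle]
    calc _ ≤ ∫⁻ t in Ioc τ₁ τ₂, ‖deriv ψ ⟨σ, t⟩ * Complex.I‖ₑ := enorm_integral_le_lintegral_enorm _
      _ ≤ ∫⁻ t in Ioo (-(Real.pi / 2)) (Real.pi / 2), ‖deriv ψ ⟨σ, t⟩ * Complex.I‖ₑ :=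
          lintegral_mono_set (Ioc_subset_Icc_self.trans hsub)
      _ ≤ ∫⁻ t in Ioo (-(Real.pi / 2)) (Real.pi / 2), (κ + κ⁻¹ * ‖deriv ψ ⟨σ, t⟩‖ₑ ^ 2) := by
          apply lintegral_mono
          intro t
          simp only [enorm_mul]
          have : ‖Complex.I‖ₑ = 1 := by simp [← ofReal_norm]
          rw [this, mul_one]
          generalize ‖deriv ψ ⟨σ, t⟩‖ₑ = x
          rcases le_total x κ with h | h
          · exact h.trans le_self_add
          · calc x = κ⁻¹ * (κ * x) := by rw [← mul_assoc, ENNReal.inv_mul_cancel hκ0 hκt, one_mul]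
              _ ≤ κ⁻¹ * x ^ 2 := by rw [sq]; gcongr
              _ ≤ _ := le_add_self
      _ = κ * ENNReal.ofReal Real.pi + κ⁻¹ * ∫⁻ t in Ioo (-(Real.pi / 2)) (Real.pi / 2),
            ‖deriv ψ ⟨σ, t⟩‖ₑ ^ 2 := by
          rw [lintegral_add_left measurable_const, setLIntegral_const, Real.volume_Ioo,
            lintegral_const_mul' _ _ (ENNReal.inv_ne_top.2 hκ0)]
          congr 3
          ring
      _ ≤ κ * ENNReal.ofReal Real.pi + κ⁻¹ * κ ^ 2 := by gcongr
      _ = ENNReal.ofReal η := by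
          rw [sq, ← mul_assoc, ENNReal.inv_mul_cancel hκ0 hκt, one_mul, hκ,
            ← ENNReal.ofReal_mul hk0.le, ← ENNReal.ofReal_add (by positivity) hk0.le]
          congr 1
          rw [hk]; field_simp
  intro τ₁ h1 τ₂ h2
  rcases le_total τ₁ τ₂ with h | h
  · rw [norm_sub_rev]; exact key τ₁ h1 τ₂ h2 h
  · exact key τ₂ h2 τ₁ h1 h

/-- small image arcs -/
lemma ct_arcs (φ : ℂ → ℂ) (hφd : DifferentiableOn ℂ φ {z : ℂ | 1 < ‖z‖})
    (hφi : InjOn φ {z : ℂ | 1 < ‖z‖})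
    (hbd : ∀ M : ℝ, ∃ C : ℝ, ∀ z, 1 < ‖z‖ → ‖z‖ ≤ M → ‖φ z‖ ≤ C)
    (ζ : ℂ) (hζ : ‖ζ‖ = 1) (η : ℝ) (hη : 0 < η) :
    ∃ ρ : ℝ, 0 < ρ ∧ ρ < η ∧ ρ ≤ 1 / 2 ∧
      (∃ z : ℂ, 1 < ‖z‖ ∧ ‖z - ζ‖ = ρ * ‖z + ζ‖) ∧
      ∀ z₁ z₂ : ℂ, 1 < ‖z₁‖ → 1 < ‖z₂‖ → ‖z₁ - ζ‖ = ρ * ‖z₁ + ζ‖ → ‖z₂ - ζ‖ = ρ * ‖z₂ + ζ‖ →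
        ‖φ z₁ - φ z₂‖ ≤ η := by
  have hζ0 : ζ ≠ 0 := by rintro rfl; simp at hζ
  let T : ℂ → ℂ := fun s => ζ * (1 + Complex.exp s) / (1 - Complex.exp s)
  have hexp1 : Real.exp (-1) ≤ 1 / 2 := by
    rw [Real.exp_neg, one_div]
    apply inv_anti₀ (by norm_num)
    have := Real.add_one_le_exp (1:ℝ); linarith
  have hne : ∀ s ∈ ctStrip, ‖Complex.exp s‖ < 1 / 2 := by
    intro s hs
    rw [Complex.norm_exp]
    exact (Real.exp_lt_exp.2 hs.1).trans_le hexp1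
  have hden : ∀ s ∈ ctStrip, 1 - Complex.exp s ≠ 0 := by
    intro s hs h
    have h1 := hne s hs
    rw [← sub_eq_zero.1 h] at h1
    norm_num at h1
  have hre : ∀ s ∈ ctStrip, 0 < (Complex.exp s).re := by
    intro s hs
    rw [Complex.exp_re]
    exact mul_pos (Real.exp_pos _) (Real.cos_pos_of_mem_Ioo hs.2)
  have hT1 : ∀ s ∈ ctStrip, 1 < ‖T s‖ := by
    intro s hs
    simp only [T, norm_div, norm_mul, hζ, one_mul]
    rw [one_lt_div (norm_pos_iff.2 (hden s hs))]
    apply lt_of_pow_lt_pow_left₀ 2 (norm_nonneg _)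
    rw [← Complex.normSq_eq_norm_sq, ← Complex.normSq_eq_norm_sq, Complex.normSq_apply,
      Complex.normSq_apply]
    have := hre s hs
    simp
    nlinarith
  have hT3 : ∀ s ∈ ctStrip, ‖T s‖ ≤ 3 := by
    intro s hs
    simp only [T, norm_div, norm_mul, hζ, one_mul]
    rw [div_le_iff₀ (norm_pos_iff.2 (hden s hs))]
    have h1 := norm_add_le 1 (Complex.exp s)
    have h2 := norm_sub_norm_le 1 (Complex.exp s)
    have h3 := hne s hs
    simp at h1 h2
    linarith
  have hTd : DifferentiableOn ℂ T ctStrip :=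
    DifferentiableOn.div (by fun_prop) (by fun_prop) hden
  have hTi : InjOn T ctStrip := by
    intro x hx y hy hxy
    have d1 := hden x hx
    have d2 := hden y hy
    simp only [T] at hxy
    rw [div_eq_div_iff d1 d2, mul_assoc, mul_assoc] at hxy
    have hxy := mul_left_cancel₀ hζ0 hxy
    have e : Complex.exp x = Complex.exp y := by linear_combination hxy / 2
    have p := Real.pi_pos
    exact Complex.exp_inj_of_neg_pi_lt_of_le_pi (by linarith [hx.2.1]) (by linarith [hx.2.2])
      (by linarith [hy.2.1]) (by linarith [hy.2.2]) e
  have hψd : DifferentiableOn ℂ (φ ∘ T) ctStrip := hφd.comp hTd hT1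
  have hψi : InjOn (φ ∘ T) ctStrip := hφi.comp hTi hT1
  have hψb : Bornology.IsBounded ((φ ∘ T) '' ctStrip) := by
    obtain ⟨C, hC⟩ := hbd 3
    refine isBounded_closedBall (x := (0:ℂ)) (r := C) |>.subset ?_
    rintro _ ⟨s, hs, rfl⟩
    rw [mem_closedBall_zero_iff]
    exact hC _ (hT1 s hs) (hT3 s hs)
  obtain ⟨σ, hσ1, hση, hσ⟩ := ct_len (φ ∘ T) hψd hψi hψb (Real.log η) η hη
  refine ⟨Real.exp σ, Real.exp_pos _, ?_, ?_, ?_, ?_⟩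
  · rwa [← Real.lt_log_iff_exp_lt hη]
  · exact (Real.exp_lt_exp.2 hσ1).le.trans hexp1
  · have hs : (σ : ℂ) ∈ ctStrip := by
      refine ⟨by simpa using hσ1, ?_⟩
      have p := Real.pi_pos
      simp only [Complex.ofReal_im]
      constructor <;> linarith
    refine ⟨T σ, hT1 _ hs, ?_⟩
    have d := hden _ hs
    have e1 : T σ - ζ = Complex.exp σ * (T σ + ζ) := by
      simp only [T]; field_simp; ring
    rw [e1, norm_mul, Complex.norm_exp, Complex.ofReal_re]
  · have hsurj : ∀ z : ℂ, 1 < ‖z‖ → ‖z - ζ‖ = Real.exp σ * ‖z + ζ‖ →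
        ∃ τ ∈ Ioo (-(Real.pi / 2)) (Real.pi / 2), T ⟨σ, τ⟩ = z := by
      intro z hz hzσ
      have hzp : z + ζ ≠ 0 := by
        intro h
        rw [eq_neg_of_add_eq_zero_left h, norm_neg, hζ] at hz
        exact lt_irrefl _ hz
      have hzm : z - ζ ≠ 0 := by
        intro h
        rw [sub_eq_zero.1 h, hζ] at hz
        exact lt_irrefl _ hz
      set u := (z - ζ) / (z + ζ) with hu
      have hu0 : u ≠ 0 := div_ne_zero hzm hzp
      have hun : ‖u‖ = Real.exp σ := by
        rw [hu, norm_div, hzσ, mul_div_assoc, div_self (norm_ne_zero_iff.2 hzp), mul_one]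
      have hure : 0 < u.re := by
        rw [hu, Complex.div_re, ← add_div]
        apply div_pos _ (Complex.normSq_pos.2 hzp)
        have a1 : 1 < z.re * z.re + z.im * z.im := by
          rw [← Complex.normSq_apply, Complex.normSq_eq_norm_sq]; nlinarith
        have a2 : ζ.re * ζ.re + ζ.im * ζ.im = 1 := by
          rw [← Complex.normSq_apply, Complex.normSq_eq_norm_sq, hζ]; norm_num
        simp
        nlinarith
      have harg := abs_lt.1 (Complex.abs_arg_lt_pi_div_two_iff.2 (Or.inl hure))
      refine ⟨u.arg, harg, ?_⟩
      have hlog : (⟨σ, u.arg⟩ : ℂ) = Complex.log u := by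
        apply Complex.ext
        · rw [Complex.log_re, hun, Real.log_exp]
        · rw [Complex.log_im]
      have hd := hden ⟨σ, u.arg⟩ ⟨hσ1, harg⟩
      rw [hlog, Complex.exp_log hu0] at hd
      rw [hlog]
      simp only [T]
      rw [Complex.exp_log hu0, div_eq_iff hd, hu]
      field_simp
      ring
    intro z₁ z₂ h1 h2 e1 e2
    obtain ⟨τ₁, ht1, rfl⟩ := hsurj z₁ h1 e1
    obtain ⟨τ₂, ht2, rfl⟩ := hsurj z₂ h2 e2
    exact hσ τ₁ ht1 τ₂ ht2

lemma ct_limit (X : Set ℂ) (hXc : IsCompact X)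
    (hXconn : IsConnected X) (hXfull : IsConnected Xᶜ) (hX1 : X.Nontrivial)
    (φ : ℂ → ℂ) (hφd : DifferentiableOn ℂ φ {z : ℂ | 1 < ‖z‖})
    (hφb : Set.BijOn φ {z : ℂ | 1 < ‖z‖} Xᶜ) (hlc : LocallyConnectedSpace (frontier X))
    (ζ : ℂ) (hζ : ‖ζ‖ = 1) : ∃ a, Tendsto φ (𝓝[{z : ℂ | 1 < ‖z‖}] ζ) (𝓝 a) := by
  obtain ⟨-, hbd⟩ := ct_infty X hXconn hX1 φ hφd hφb
  have hpos : ∀ n : ℕ, 0 < 1 / ((n : ℝ) + 1) := fun n => by positivity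
  choose ρ hρ0 hρη hρ2 hex hdiam using fun n : ℕ =>
    ct_arcs φ hφd hφb.injOn hbd ζ hζ (1 / ((n : ℝ) + 1)) (hpos n)
  choose z hz hzρ using hex
  have hlim0 : Tendsto (fun n : ℕ => 1 / ((n : ℝ) + 1)) atTop (𝓝 0) :=
    tendsto_one_div_add_atTop_nhds_zero_nat
  have hρlim : Tendsto ρ atTop (𝓝 0) :=
    squeeze_zero (fun n => (hρ0 n).le) (fun n => (hρη n).le) hlim0
  have hnorm3 : ∀ (w : ℂ) (r : ℝ), r ≤ 1 / 2 → ‖w - ζ‖ ≤ r * ‖w + ζ‖ → ‖w‖ ≤ 3 := by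
    intro w r hr h
    have h1 := norm_sub_norm_le w ζ
    have h2 := norm_add_le w ζ
    have h3 : r * ‖w + ζ‖ ≤ 1 / 2 * ‖w + ζ‖ := by gcongr
    rw [hζ] at h1 h2
    linarith
  obtain ⟨C3, hC3⟩ := hbd 3
  have hzlim : Tendsto z atTop (𝓝 ζ) := by
    rw [tendsto_iff_norm_sub_tendsto_zero]
    have h4 : Tendsto (fun n => ρ n * 4) atTop (𝓝 0) := by simpa using hρlim.mul_const 4
    refine squeeze_zero (fun n => norm_nonneg _) (fun n => ?_) h4
    rw [hzρ n]
    have h1 := hnorm3 (z n) (ρ n) (hρ2 n) (hzρ n).le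
    have h2 := norm_add_le (z n) ζ
    have := (hρ0 n).le
    gcongr
    linarith
  obtain ⟨a, -, k, hk, hka⟩ := (isCompact_closedBall (0:ℂ) C3).tendsto_subseq
    (x := fun n => φ (z n)) (fun n => by
      rw [mem_closedBall_zero_iff]
      exact hC3 _ (hz n) (hnorm3 (z n) (ρ n) (hρ2 n) (hzρ n).le))
  have haX : a ∈ frontier X := ct_bd X hXc φ hφd hφb ζ hζ (z ∘ k) (fun n => hz _)
    (hzlim.comp hk.tendsto_atTop) a hka
  refine ⟨a, ?_⟩
  rw [Metric.tendsto_nhds]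
  intro ε' hε'
  obtain ⟨ε, hε, hεε'⟩ := exists_between hε'
  -- local connectivity
  obtain ⟨V, hV, hVc, hVb⟩ := locallyConnectedSpace_iff_connected_subsets.1 hlc ⟨a, haX⟩
    (Subtype.val ⁻¹' closedBall a ε) (continuous_subtype_val.continuousAt.preimage_mem_nhds
      (closedBall_mem_nhds _ hε))
  obtain ⟨W, hW, hWV⟩ := mem_nhds_subtype _ _ _ |>.1 hV
  obtain ⟨δ₀, hδ₀, hδW⟩ := Metric.mem_nhds_iff.1 hW
  set N : Set ℂ := Subtype.val '' V with hN
  have hNc : IsPreconnected N := hVc.image _ continuous_subtype_val.continuousOn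
  have hNb : N ⊆ closedBall a ε := by rintro _ ⟨v, hv, rfl⟩; exact hVb hv
  have hNX : N ⊆ frontier X := by rintro _ ⟨v, hv, rfl⟩; exact v.2
  set δ := min δ₀ ε with hδ
  have hδ0 : 0 < δ := lt_min hδ₀ hε
  have hNδ : ∀ w ∈ frontier X, w ∈ ball a δ → w ∈ N := fun w hw hwb =>
    ⟨⟨w, hw⟩, hWV (hδW (ball_subset_ball (min_le_left _ _) hwb)), rfl⟩
  -- far point
  obtain ⟨q, hqX, hqa⟩ : ∃ q, q ∉ X ∧ ε < ‖q - a‖ := by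
    have hbdd : Bornology.IsBounded (X ∪ closedBall a ε) := hXc.isBounded.union isBounded_closedBall
    obtain ⟨q, hq⟩ : ∃ q, q ∉ X ∪ closedBall a ε := by
      by_contra! hcon
      exact NormedSpace.unbounded_univ ℝ ℂ (hbdd.subset fun x _ => hcon x)
    rw [mem_union, not_or, mem_closedBall, not_le, dist_eq_norm] at hq
    exact ⟨q, hq⟩
  obtain ⟨zq, hzq, hzqq⟩ := hφb.surjOn hqX
  have hzq : 1 < ‖zq‖ := hzq
  have hzqζ : 0 < ‖zq - ζ‖ := by
    rw [norm_pos_iff, sub_ne_zero]; rintro rfl; linarith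
  -- choose n
  have ev1 : ∀ᶠ n in atTop, ‖φ (z (k n)) - a‖ < δ / 3 := by
    have := (tendsto_iff_norm_sub_tendsto_zero.1 hka).eventually_lt_const (show 0 < δ / 3 by positivity)
    exact this
  have ev2 : ∀ᶠ n in atTop, 1 / (((k n : ℕ) : ℝ) + 1) < δ / 3 :=
    (hlim0.comp hk.tendsto_atTop).eventually_lt_const (show 0 < δ / 3 by positivity)
  have ev3 : ∀ᶠ n in atTop, ρ (k n) * ‖zq + ζ‖ < ‖zq - ζ‖ := by
    have := (hρlim.comp hk.tendsto_atTop).mul_const ‖zq + ζ‖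
    rw [zero_mul] at this
    exact this.eventually_lt_const hzqζ
  obtain ⟨n, ⟨h1, h2⟩, h3⟩ := ((ev1.and ev2).and ev3).exists
  set m := k n
  have hlt_open : IsOpen {w : ℂ | ‖w - ζ‖ < ρ m * ‖w + ζ‖} :=
    isOpen_lt (by fun_prop) (by fun_prop)
  have hle_closed : IsClosed {w : ℂ | ‖w - ζ‖ ≤ ρ m * ‖w + ζ‖} :=
    isClosed_le (by fun_prop) (by fun_prop)
  have heq_closed : IsClosed {w : ℂ | ‖w - ζ‖ = ρ m * ‖w + ζ‖} :=
    isClosed_eq (by fun_prop) (by fun_prop)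
  set E : Set ℂ := {z : ℂ | 1 < ‖z‖} with hE
  set Cm : Set ℂ := φ '' (E ∩ {w : ℂ | ‖w - ζ‖ = ρ m * ‖w + ζ‖}) with hCm
  set U : Set ℂ := φ '' (E ∩ {w : ℂ | ‖w - ζ‖ < ρ m * ‖w + ζ‖}) with hU
  have hclC : closure Cm ⊆ Cm ∪ frontier X := ct_closure X hXc φ hφd hφb _ heq_closed
  have hCb : closure Cm ⊆ closedBall a (2 * δ / 3) := by
    apply closure_minimal _ isClosed_closedBall
    rintro _ ⟨w, ⟨hw1, hw2⟩, rfl⟩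
    rw [mem_closedBall, dist_eq_norm]
    have h4 := hdiam m w (z m) hw1 (hz m) hw2 (hzρ m)
    have h5 := norm_sub_le_norm_sub_add_norm_sub (φ w) (φ (z m)) a
    linarith
  have hfX : frontier X ⊆ X := hXc.isClosed.frontier_subset
  have hUall : ∀ p ∈ U, ‖p - a‖ ≤ ε := by
    intro p hp
    by_contra! hpa
    refine ct_janis X hXc hXfull.isPreconnected a ε (closure Cm) (closure N) U isClosed_closure
      isClosed_closure hNc.closure (hCb.trans (closedBall_subset_closedBall ?_))
      (closure_minimal hNb isClosed_closedBall) (closure_minimal hNX isClosed_frontier)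
      ?_ ?_ ?_ ?_ ?_ ?_ p q hp hqX ?_ hpa hqa
    · have : δ ≤ ε := min_le_right _ _
      linarith
    · rintro w ⟨hw1, hw2⟩
      apply subset_closure
      apply hNδ w hw2
      have := hCb hw1
      rw [mem_closedBall] at this
      rw [mem_ball]; linarith
    · rw [isOpen_iff_mem_nhds]
      rintro _ ⟨w, hw, rfl⟩
      exact ct_open_phi φ hφd hφb.injOn w hw.1 (image_mem_map ((ct_isOpenE.inter hlt_open).mem_nhds hw))
    · refine isBounded_closedBall (x := (0:ℂ)) (r := C3) |>.subset ?_
      rintro _ ⟨w, hw, rfl⟩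
      rw [mem_closedBall_zero_iff]
      exact hC3 _ hw.1 (hnorm3 w (ρ m) (hρ2 m) (le_of_lt hw.2))
    · rintro _ ⟨w, hw, rfl⟩
      exact hφb.mapsTo hw.1
    · rw [Set.disjoint_left]
      rintro _ ⟨w, hw, rfl⟩ hw'
      rcases hclC hw' with ⟨y, hy, hyw⟩ | h
      · have := hφb.injOn hy.1 hw.1 hyw
        subst this
        exact (ne_of_lt hw.2) hy.2
      · exact hφb.mapsTo hw.1 (hfX h)
    · have h6 : closure U ⊆ closure (φ '' (E ∩ {w : ℂ | ‖w - ζ‖ ≤ ρ m * ‖w + ζ‖})) :=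
        closure_mono (image_mono (inter_subset_inter_right _ fun w hw => le_of_lt (show ‖w - ζ‖ < ρ m * ‖w + ζ‖ from hw)))
      refine (h6.trans (ct_closure X hXc φ hφd hφb _ hle_closed)).trans ?_
      rintro w (⟨y, hy, rfl⟩ | hw)
      · rcases lt_or_eq_of_le (show ‖y - ζ‖ ≤ ρ m * ‖y + ζ‖ from hy.2) with h | h
        · exact Or.inl ⟨y, ⟨hy.1, h⟩, rfl⟩
        · exact Or.inr (Or.inl (subset_closure ⟨y, ⟨hy.1, h⟩, rfl⟩))
      · exact Or.inr (Or.inr hw)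
    · rintro ⟨y, hy, hyq⟩
      have := hφb.injOn hy.1 hzq (hyq.trans hzqq.symm)
      subst this
      exact lt_asymm h3 hy.2
  have hζn : ζ ∈ {w : ℂ | ‖w - ζ‖ < ρ m * ‖w + ζ‖} := by
    have : ‖ζ + ζ‖ = 2 := by rw [← two_mul, norm_mul, hζ]; norm_num
    simp only [mem_ofPred_eq, sub_self, norm_zero, this]
    have := hρ0 m
    positivity
  filter_upwards [self_mem_nhdsWithin, mem_nhdsWithin_of_mem_nhds (hlt_open.mem_nhds hζn)] with w hw1 hw2
  rw [dist_eq_norm]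
  exact (hUall _ ⟨w, ⟨hw1, hw2⟩, rfl⟩).trans_lt hεε'

/-- Carathéodory–Torhorst theorem: for a compact, connected, full set `X ⊆ ℂ` with
more than one point and a conformal isomorphism `φ : ℂ \ 𝔻̄ → ℂ \ X`, the map `φ`
extends continuously to `{|z| ≥ 1}` iff `∂X` is locally connected. -/
theorem caratheodory_torhorst (X : Set ℂ) (hXc : IsCompact X)
    (hXconn : IsConnected X) (hXfull : IsConnected Xᶜ) (hX1 : X.Nontrivial)
    (φ : ℂ → ℂ) (hφd : DifferentiableOn ℂ φ {z : ℂ | 1 < ‖z‖})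
    (hφb : Set.BijOn φ {z : ℂ | 1 < ‖z‖} Xᶜ) :
    (∃ Φ : ℂ → ℂ, ContinuousOn Φ {z : ℂ | 1 ≤ ‖z‖} ∧
        ∀ z : ℂ, 1 < ‖z‖ → Φ z = φ z) ↔
      LocallyConnectedSpace (frontier X) := by
  constructor
  · rintro ⟨Φ, hΦ, hΦe⟩
    exact ct_forward X hXc hXconn hX1 φ hφd hφb Φ hΦ hΦe
  · intro hlc
    have hE := ct_isOpenE
    have hin : ∀ z : ℂ, 1 < ‖z‖ → Tendsto φ (𝓝[{z : ℂ | 1 < ‖z‖}] z) (𝓝 (φ z)) :=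
      fun z hz => hφd.continuousOn z hz
    refine ⟨extendFrom {z : ℂ | 1 < ‖z‖} φ, ?_, ?_⟩
    · apply continuousOn_extendFrom
      · intro z hz
        have hz : 1 ≤ ‖z‖ := hz
        have hl : Tendsto (fun n : ℕ => ((1 + 1 / ((n : ℝ) + 1) : ℝ) : ℂ) * z) atTop (𝓝 z) := by
          have h1 : Tendsto (fun n : ℕ => 1 + 1 / ((n : ℝ) + 1)) atTop (𝓝 (1 + 0)) :=
            tendsto_one_div_add_atTop_nhds_zero_nat.const_add 1
          have h2 := ((Complex.continuous_ofReal.tendsto _).comp h1).mul_const z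
          simpa [Function.comp_def] using h2
        refine mem_closure_of_tendsto hl (Eventually.of_forall fun n => ?_)
        have : 0 < 1 / ((n : ℝ) + 1) := by positivity
        show 1 < ‖_‖
        rw [norm_mul, Complex.norm_real, Real.norm_eq_abs, abs_of_pos (by positivity)]
        nlinarith
      · intro z hz
        rcases lt_or_eq_of_le (show 1 ≤ ‖z‖ from hz) with h | h
        · exact ⟨_, hin z h⟩
        · exact ct_limit X hXc hXconn hXfull hX1 φ hφd hφb hlc z h.symm
    · intro z hz
      exact extendFrom_eq (subset_closure hz) (hin z hz)
end
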